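/- arXiv:2301.07744 — 3 statements merged into one kernel-verified Lean document; each statement's English description precedes it below -/
import Mathlib

section
/- (Marstrand) If K ⊂ ℝ² is a Borel set with Hausdorff dimension strictly greater than 1, then for Lebesgue-almost every θ ∈ ℝ, the orthogonal projection of K onto the line L_θ through the origin in direction (cos θ, sin θ) has positive one-dimensional Lebesgue measure. -/
open MeasureTheory

namespace Marstrand
open Set Filter Topology
open scoped ENNReal

theorem analytic_inner {X : Type*} [MetricSpace X] [MeasurableSpace X] [BorelSpace X]
    (μ : Measure X) [IsFiniteMeasure μ] (f : (ℕ → ℕ) → X) (hf : Continuous f)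
    (c : ℝ≥0∞) (hc : c < μ (range f)) : ∃ C ⊆ range f, IsCompact C ∧ c ≤ μ C := by
  have step : ∀ (E : {E : Set (ℕ → ℕ) // c < μ (f '' E)}) (n : ℕ),
      ∃ m : ℕ, c < μ (f '' (E.1 ∩ {x | x n ≤ m})) := by
    intro E n
    have h1 : f '' E.1 = ⋃ m : ℕ, f '' (E.1 ∩ {x | x n ≤ m}) := by
      rw [← image_iUnion, ← inter_iUnion]
      congr 1
      ext x
      simp only [mem_inter_iff, mem_iUnion, mem_ofPred_eq]
      exact ⟨fun h => ⟨h, x n, le_rfl⟩, fun h => h.1⟩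
    have h2 : Monotone fun m : ℕ => f '' (E.1 ∩ {x | x n ≤ m}) := by
      intro a b hab
      apply image_mono
      apply inter_subset_inter_right
      intro x hx
      exact le_trans hx hab
    have h3 := E.2
    rw [h1, h2.measure_iUnion] at h3
    exact lt_iSup_iff.1 h3
  choose m hm using step
  let E : ℕ → {E : Set (ℕ → ℕ) // c < μ (f '' E)} := fun n =>
    Nat.rec ⟨univ, by simpa using hc⟩ (fun n E => ⟨E.1 ∩ {x | x n ≤ m E n}, hm E n⟩) n
  have hE : ∀ n, (E (n + 1)).1 = (E n).1 ∩ {x | x n ≤ m (E n) n} := fun n => rfl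
  let N : ℕ → ℕ := fun n => m (E n) n
  have hEN : ∀ n x, x ∈ (E n).1 → ∀ i < n, x i ≤ N i := by
    intro n
    induction n with
    | zero => intro x _ i hi; omega
    | succ n ih =>
      intro x hx i hi
      rw [hE] at hx
      rcases Nat.lt_succ_iff_lt_or_eq.1 hi with h | h
      · exact ih x hx.1 i h
      · subst h; exact hx.2
  let B : Set (ℕ → ℕ) := Set.pi univ fun i => Iic (N i)
  have hB : IsCompact B := isCompact_univ_pi fun i => (finite_Iic (N i)).isCompact
  refine ⟨f '' B, image_subset_range _ _, hB.image hf, ?_⟩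
  rw [Set.measure_eq_iInf_isOpen]
  refine le_iInf fun V => le_iInf fun hV => le_iInf fun hVo => ?_
  suffices ∃ n, f '' (E n).1 ⊆ V by
    obtain ⟨n, hn⟩ := this
    exact (E n).2.le.trans (measure_mono hn)
  by_contra! hcon
  have : ∀ n, ∃ x ∈ (E n).1, f x ∉ V := by
    intro n
    obtain ⟨y, ⟨x, hx, rfl⟩, hy⟩ := Set.not_subset.1 (hcon n)
    exact ⟨x, hx, hy⟩
  choose x hx hxV using this
  obtain ⟨y, hy, φ, hφ, hlim⟩ := hB.tendsto_subseq (x := fun n i => min (x n i) (N i))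
    (fun n i _ => Set.mem_Iic.2 (min_le_right _ _))
  have hlim2 : Tendsto (x ∘ φ) atTop (𝓝 y) := by
    rw [tendsto_pi_nhds] at hlim ⊢
    intro i
    refine (hlim i).congr' ?_
    filter_upwards [eventually_gt_atTop i] with n hn
    exact min_eq_left (hEN _ _ (hx (φ n)) i (hn.trans_le (hφ.id_le n)))
  have h3 := (hf.tendsto y).comp hlim2
  have h4 := h3 (hVo.mem_nhds (hV ⟨y, hy, rfl⟩))
  obtain ⟨n, hn⟩ := (mem_map.1 h4 : _ ∈ atTop) |> fun h => Filter.Eventually.exists (f := atTop) h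
  exact hxV _ hn

theorem analytic_nullMeasurable {X : Type*} [MetricSpace X] [MeasurableSpace X] [BorelSpace X]
    (μ : Measure X) [SigmaFinite μ] (A : Set X) (hA : AnalyticSet A) : NullMeasurableSet A μ := by
  suffices NullMeasurableSet A μ.toFinite from this.mono_ac (absolutelyContinuous_toFinite μ)
  rw [AnalyticSet] at hA
  rcases hA with rfl | ⟨f, hf, rfl⟩
  · simp
  by_cases h0 : μ.toFinite (range f) = 0
  · exact NullMeasurableSet.of_null h0
  obtain ⟨u, hu, hu2, hu3⟩ := exists_seq_strictMono_tendsto' (pos_iff_ne_zero.2 h0)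
  choose C hC1 hC2 hC3 using fun n => analytic_inner μ.toFinite f hf (u n) (hu2 n).2
  have hm : MeasurableSet (⋃ n, C n) := MeasurableSet.iUnion fun n => (hC2 n).measurableSet
  have := ae_eq_of_subset_of_measure_ge (μ := μ.toFinite) (s := ⋃ n, C n) (t := range f)
    (iUnion_subset hC1) ?_ hm.nullMeasurableSet (measure_ne_top _ _)
  · exact hm.nullMeasurableSet.congr this
  · exact le_of_tendsto' hu3 fun n => (hC3 n).trans (measure_mono (subset_iUnion _ _))
noncomputable def idx (k : ℕ) (z : ℂ) : ℤ × ℤ := (⌊(2:ℝ) ^ k * z.re⌋, ⌊(2:ℝ) ^ k * z.im⌋)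

/-- dyadic square of level `k`, index `p` -/
def Q (k : ℕ) (p : ℤ × ℤ) : Set ℂ := {z | idx k z = p}

theorem mem_Q {k : ℕ} {p : ℤ × ℤ} {z : ℂ} : z ∈ Q k p ↔ idx k z = p := Iff.rfl

def par (p : ℤ × ℤ) : ℤ × ℤ := (p.1 / 2, p.2 / 2)

def ch (p : ℤ × ℤ) : Finset (ℤ × ℤ) :=
  ({2 * p.1, 2 * p.1 + 1} : Finset ℤ) ×ˢ ({2 * p.2, 2 * p.2 + 1} : Finset ℤ)

theorem mem_ch {p c : ℤ × ℤ} : c ∈ ch p ↔ par c = p := by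
  obtain ⟨a, b⟩ := p
  obtain ⟨c, d⟩ := c
  simp only [ch, par, Finset.mem_product, Finset.mem_insert, Finset.mem_singleton, Prod.mk.injEq]
  omega

theorem card_ch (p : ℤ × ℤ) : (ch p).card = 4 := by
  simp [ch, Finset.card_product]

theorem floor_par (x : ℝ) (k : ℕ) : ⌊(2:ℝ) ^ (k + 1) * x⌋ / 2 = ⌊(2:ℝ) ^ k * x⌋ := by
  symm
  rw [Int.floor_eq_iff]
  have h1 := Int.floor_le ((2:ℝ) ^ (k + 1) * x)
  have h2 := Int.lt_floor_add_one ((2:ℝ) ^ (k + 1) * x)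
  set n := ⌊(2:ℝ) ^ (k + 1) * x⌋
  have h3 : 2 * (n / 2) ≤ n := by omega
  have h4 : n + 1 ≤ 2 * (n / 2) + 2 := by omega
  have h3' : (2:ℝ) * ((n / 2 : ℤ) : ℝ) ≤ n := by exact_mod_cast h3
  have h4' : (n:ℝ) + 1 ≤ (2:ℝ) * ((n / 2 : ℤ) : ℝ) + 2 := by exact_mod_cast h4
  rw [pow_succ] at h1 h2
  constructor <;> nlinarith

theorem par_idx (k : ℕ) (z : ℂ) : par (idx (k + 1) z) = idx k z := by
  simp [par, idx, floor_par]

theorem Q_subset_par (k : ℕ) (p : ℤ × ℤ) : Q (k + 1) p ⊆ Q k (par p) := by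
  intro z hz
  rw [mem_Q] at *
  rw [← hz, par_idx]

theorem Q_subset_anc (k j : ℕ) (p : ℤ × ℤ) : ∃ p', Q (k + j) p ⊆ Q k p' := by
  induction j generalizing p with
  | zero => exact ⟨p, Subset.rfl⟩
  | succ j ih =>
    obtain ⟨p', hp'⟩ := ih (par p)
    exact ⟨p', (Q_subset_par (k + j) p).trans hp'⟩

theorem measurable_idx (k : ℕ) : Measurable (idx k) := by
  unfold idx
  fun_prop

theorem measurableSet_Q (k : ℕ) (p : ℤ × ℤ) : MeasurableSet (Q k p) :=
  measurable_idx k (measurableSet_singleton p)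

theorem Q_eq (k : ℕ) (p : ℤ × ℤ) : Q k p = Complex.measurableEquivRealProd ⁻¹'
    ((Ico ((p.1:ℝ) / 2 ^ k) ((p.1 + 1) / 2 ^ k)) ×ˢ
      (Ico ((p.2:ℝ) / 2 ^ k) ((p.2 + 1) / 2 ^ k))) := by
  ext z
  have : (0:ℝ) < 2 ^ k := by positivity
  rw [mem_Q, idx, Prod.ext_iff]
  simp only [Int.floor_eq_iff, mem_preimage, mem_prod, mem_Ico,
    Complex.measurableEquivRealProd_apply, div_le_iff₀ this, lt_div_iff₀ this, mul_comm]

theorem volume_Q (k : ℕ) (p : ℤ × ℤ) : volume (Q k p) = (4⁻¹ : ℝ≥0∞) ^ k := by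
  rw [Q_eq, Complex.volume_preserving_equiv_real_prod.measure_preimage
    ((measurableSet_Ico.prod measurableSet_Ico).nullMeasurableSet), Measure.volume_eq_prod,
    Measure.prod_prod, Real.volume_Ico, Real.volume_Ico]
  have : ∀ a : ℝ, (a + 1) / 2 ^ k - a / 2 ^ k = (2⁻¹) ^ k := by
    intro a; rw [inv_pow]; ring
  rw [this, this, ← ENNReal.ofReal_mul (by positivity), ← mul_pow, ENNReal.ofReal_pow (by norm_num)]
  congr 1
  rw [← mul_inv, ENNReal.ofReal_inv_of_pos (by norm_num)]
  norm_num

theorem ediam_Q (k : ℕ) (p : ℤ × ℤ) : Metric.ediam (Q k p) ≤ 2 * (2⁻¹ : ℝ≥0∞) ^ k := by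
  have h2 : (2 * (2⁻¹ : ℝ≥0∞) ^ k) = ENNReal.ofReal (2 * 2⁻¹ ^ k) := by
    rw [ENNReal.ofReal_mul (by norm_num), ENNReal.ofReal_pow (by norm_num),
      ENNReal.ofReal_inv_of_pos (by norm_num)]
    norm_num
  refine Metric.ediam_le fun x hx y hy => ?_
  rw [h2, edist_dist]
  apply ENNReal.ofReal_le_ofReal
  rw [Complex.dist_eq]
  refine (Complex.norm_le_abs_re_add_abs_im _).trans ?_
  rw [mem_Q, idx, Prod.ext_iff] at hx hy
  simp only [Int.floor_eq_iff] at hx hy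
  have hk : (0:ℝ) < 2 ^ k := by positivity
  have e : (2:ℝ)⁻¹ ^ k * 2 ^ k = 1 := by rw [← mul_pow]; norm_num
  have key : ∀ a b c : ℝ, (c ≤ 2 ^ k * a ∧ 2 ^ k * a < c + 1) → (c ≤ 2 ^ k * b ∧ 2 ^ k * b < c + 1)
      → |a - b| ≤ 2⁻¹ ^ k := by
    intro a b c h1 h2
    rw [abs_le]
    constructor <;> by_contra! h <;> nlinarith [mul_lt_mul_of_pos_right h hk]
  have h3 := key _ _ _ hx.1 hy.1
  have h4 := key _ _ _ hx.2 hy.2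
  simp only [Complex.sub_re, Complex.sub_im]
  linarith

theorem ball_subset (k : ℕ) (x : ℂ) : {y : ℂ | ‖y - x‖ ≤ 2⁻¹ ^ k} ⊆
    ⋃ e ∈ (Finset.Icc (-1:ℤ) 1 ×ˢ Finset.Icc (-1:ℤ) 1), Q k (idx k x + e) := by
  intro y hy
  have hy' : ‖y - x‖ ≤ 2⁻¹ ^ k := hy
  have h1 := (Complex.abs_re_le_norm (y - x)).trans hy'
  have h2 := (Complex.abs_im_le_norm (y - x)).trans hy'
  have hk : (0:ℝ) < 2 ^ k := by positivity
  have e : (2:ℝ)⁻¹ ^ k * 2 ^ k = 1 := by rw [← mul_pow]; norm_num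
  have key : ∀ a b : ℝ, |a - b| ≤ 2⁻¹ ^ k →
      -1 ≤ ⌊(2:ℝ) ^ k * a⌋ - ⌊(2:ℝ) ^ k * b⌋ ∧ ⌊(2:ℝ) ^ k * a⌋ - ⌊(2:ℝ) ^ k * b⌋ ≤ 1 := by
    intro a b h
    rw [abs_le] at h
    have h3 := mul_le_mul_of_nonneg_right h.1 hk.le
    have h4 := mul_le_mul_of_nonneg_right h.2 hk.le
    have h5 := Int.floor_le ((2:ℝ) ^ k * a)
    have h6 := Int.lt_floor_add_one ((2:ℝ) ^ k * a)
    have h7 := Int.floor_le ((2:ℝ) ^ k * b)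
    have h8 := Int.lt_floor_add_one ((2:ℝ) ^ k * b)
    set m := ⌊(2:ℝ) ^ k * a⌋
    set n := ⌊(2:ℝ) ^ k * b⌋
    have h9 : ((n:ℤ):ℝ) < ((m + 2 : ℤ) : ℝ) := by push_cast; nlinarith
    have h10 : ((m:ℤ):ℝ) < ((n + 2 : ℤ) : ℝ) := by push_cast; nlinarith
    have h9 := Int.cast_lt.1 h9
    have h10 := Int.cast_lt.1 h10
    omega
  simp only [mem_iUnion]
  refine ⟨idx k y - idx k x, ?_, ?_⟩
  · simp only [idx, Finset.mem_product, Finset.mem_Icc, Prod.fst_sub, Prod.snd_sub]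
    exact ⟨key _ _ h1, key _ _ h2⟩
  · rw [mem_Q]; abel

open Classical in
/-- truncated tree cost -/
noncomputable def cost (a : ℝ≥0∞) (U : Set ℂ) : ℕ → ℕ → ℤ × ℤ → ℝ≥0∞
  | 0, k, p => if Q k p ⊆ U then a ^ k else 0
  | d + 1, k, p => min (a ^ k) (∑ c ∈ ch p, cost a U d (k + 1) c)

theorem cost_le (a : ℝ≥0∞) (U : Set ℂ) (d k : ℕ) (p : ℤ × ℤ) : cost a U d k p ≤ a ^ k := by
  cases d with
  | zero => rw [cost]; split_ifs <;> simp
  | succ d => rw [cost]; exact min_le_left _ _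

theorem cost_mono_succ (a : ℝ≥0∞) (ha : 1 ≤ 4 * a) (U : Set ℂ) (d k : ℕ) (p : ℤ × ℤ) :
    cost a U d k p ≤ cost a U (d + 1) k p := by
  induction d generalizing k p with
  | zero =>
    rw [cost, cost]
    split_ifs with h
    · refine le_min le_rfl ?_
      have : ∀ c ∈ ch p, cost a U 0 (k + 1) c = a ^ (k + 1) := by
        intro c hc
        rw [mem_ch] at hc
        rw [cost, if_pos]
        exact (Q_subset_par k c).trans (hc ▸ h)
      rw [Finset.sum_congr rfl this, Finset.sum_const, card_ch]
      calc a ^ k = 1 * a ^ k := by ring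
        _ ≤ (4 * a) * a ^ k := by gcongr
        _ = _ := by rw [nsmul_eq_mul]; push_cast; ring
    · exact zero_le
  | succ d ih =>
    rw [cost, cost]
    gcongr
    exact ih _ _

theorem exists_density (a : ℝ≥0∞) (ha : 1 ≤ 4 * a) (ha1 : a ≤ 1) (U : Set ℂ) (d k : ℕ)
    (p : ℤ × ℤ) : ∃ h : ℂ → ℝ≥0∞, Measurable h ∧ (∀ z, z ∉ Q k p → h z = 0) ∧
      (∀ z, z ∉ U → h z = 0) ∧ ∫⁻ z, h z = cost a U d k p ∧
      ∀ k' p', ∫⁻ z in Q k' p', h z ≤ a ^ k' := by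
  induction d generalizing k p with
  | zero =>
    by_cases hU : Q k p ⊆ U
    · have h4 : (4:ℝ≥0∞) ^ k * 4⁻¹ ^ k = 1 := by
        rw [← mul_pow, ENNReal.mul_inv_cancel (by norm_num) (by norm_num), one_pow]
      have hmass : ∫⁻ z, (Q k p).indicator (fun _ => a ^ k * 4 ^ k) z = a ^ k := by
        rw [lintegral_indicator_const (measurableSet_Q k p), volume_Q, mul_assoc, h4, mul_one]
      refine ⟨(Q k p).indicator fun _ => a ^ k * 4 ^ k, ?_, ?_, ?_, ?_, ?_⟩
      · exact measurable_const.indicator (measurableSet_Q k p)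
      · intro z hz; simp [hz]
      · intro z hz; exact indicator_of_notMem (fun h => hz (hU h)) _
      · rw [cost, if_pos hU, hmass]
      · intro k' p'
        rcases le_total k' k with hk | hk
        · refine (setLIntegral_le_lintegral _ _).trans ?_
          rw [hmass]
          exact pow_le_pow_of_le_one zero_le ha1 hk
        · obtain ⟨j, rfl⟩ := Nat.exists_eq_add_of_le hk
          calc ∫⁻ z in Q (k + j) p', (Q k p).indicator (fun _ => a ^ k * 4 ^ k) z
              ≤ ∫⁻ z in Q (k + j) p', a ^ k * 4 ^ k := by
                apply lintegral_mono
                intro z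
                exact indicator_le_self _ _ _
            _ = a ^ k * 4⁻¹ ^ j := by
                rw [setLIntegral_const, volume_Q, pow_add, mul_assoc, ← mul_assoc (4 ^ k), h4,
                  one_mul]
            _ ≤ a ^ k * a ^ j := by
                gcongr
                rw [ENNReal.inv_le_iff_le_mul (by simp) (by simp)]
                exact ha
            _ = _ := by rw [pow_add]
    · exact ⟨0, measurable_const, by simp, by simp, by simp [cost, hU], by simp⟩
  | succ d ih =>
    choose h hm hQ hU hmass hb using fun c => ih (k + 1) c
    set S := ∑ c ∈ ch p, cost a U d (k + 1) c with hS
    have hle : cost a U (d + 1) k p ≤ S := by rw [cost]; exact min_le_right _ _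
    have hSint : ∫⁻ z, ∑ c ∈ ch p, h c z = S := by
      rw [lintegral_finsetSum _ (fun c _ => hm c)]
      exact Finset.sum_congr rfl fun c _ => hmass c
    have hSm : Measurable fun z => ∑ c ∈ ch p, h c z := by fun_prop
    have hSfin : S ≠ ∞ := by
      rw [hS]
      refine (ENNReal.sum_lt_top.2 fun c _ => ?_).ne
      exact (cost_le _ _ _ _ _).trans_lt (ENNReal.pow_lt_top (ha1.trans_lt (by simp)))
    obtain ⟨r, hr1, hr⟩ : ∃ r : ℝ≥0∞, r ≤ 1 ∧ r * S = cost a U (d + 1) k p := by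
      by_cases h0 : S = 0
      · exact ⟨1, le_rfl, by rw [h0] at hle ⊢; simpa using (nonpos_iff_eq_zero.1 hle).symm⟩
      · exact ⟨cost a U (d + 1) k p / S, ENNReal.div_le_of_le_mul (by simpa using hle),
          ENNReal.div_mul_cancel h0 hSfin⟩
    have htot : ∫⁻ z, r * ∑ c ∈ ch p, h c z = cost a U (d + 1) k p := by
      rw [lintegral_const_mul _ hSm, hSint, hr]
    refine ⟨fun z => r * ∑ c ∈ ch p, h c z, by fun_prop, ?_, ?_, htot, ?_⟩
    · intro z hz
      beta_reduce
      rw [Finset.sum_eq_zero, mul_zero]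
      intro c hc
      apply hQ
      intro hzc
      rw [mem_ch] at hc
      exact hz (hc ▸ Q_subset_par k c hzc)
    · intro z hz
      beta_reduce
      rw [Finset.sum_eq_zero, mul_zero]
      intro c hc
      exact hU c z hz
    · intro k' p'
      rcases le_or_gt k' k with hk | hk
      · refine (setLIntegral_le_lintegral _ _).trans ?_
        rw [htot]
        exact (cost_le _ _ _ _ _).trans (pow_le_pow_of_le_one zero_le ha1 hk)
      · obtain ⟨j, rfl⟩ := Nat.exists_eq_add_of_le (Nat.succ_le_of_lt hk)
        obtain ⟨p'', hp''⟩ := Q_subset_anc (k + 1) j p'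
        refine le_trans ?_ (hb p'' (k + 1 + j) p')
        apply setLIntegral_mono' (measurableSet_Q _ _)
        intro z hz
        have hz' := mem_Q.1 (hp'' hz)
        calc r * ∑ c ∈ ch p, h c z ≤ 1 * ∑ c ∈ ch p, h c z := by gcongr
          _ = ∑ c ∈ ch p, h c z := one_mul _
          _ ≤ h p'' z := by
            by_cases hp : p'' ∈ ch p
            · rw [Finset.sum_eq_single_of_mem p'' hp]
              intro c _ hne
              exact hQ c z fun hzc => hne (by rw [← mem_Q.1 hzc, hz'])
            · rw [Finset.sum_eq_zero]
              · exact zero_le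
              intro c hc
              exact hQ c z fun hzc => hp (by rw [← hz', mem_Q.1 hzc]; exact hc)

noncomputable def costI (a : ℝ≥0∞) (U : Set ℂ) (k : ℕ) (p : ℤ × ℤ) : ℝ≥0∞ := ⨆ d, cost a U d k p

theorem costI_step (a : ℝ≥0∞) (ha : 1 ≤ 4 * a) (U : Set ℂ) (k : ℕ) (p : ℤ × ℤ)
    (h : costI a U k p ≠ a ^ k) : ∑ c ∈ ch p, costI a U (k + 1) c ≤ costI a U k p := by
  have hle : costI a U k p ≤ a ^ k := iSup_le fun d => cost_le _ _ _ _ _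
  have hlt := lt_of_le_of_ne hle h
  unfold costI
  rw [ENNReal.finsetSum_iSup_of_monotone
    (fun c => monotone_nat_of_le_succ fun d => cost_mono_succ a ha U d (k + 1) c)]
  refine iSup_le fun d => ?_
  refine le_trans ?_ (le_iSup _ (d + 1))
  have h1 : cost a U (d + 1) k p < a ^ k := (le_iSup (fun d => cost a U d k p) (d + 1)).trans_lt hlt
  rw [cost] at h1 ⊢
  rcases min_lt_iff.1 h1 with h2 | h2
  · exact absurd h2 (lt_irrefl _)
  · exact le_min h2.le le_rfl

open Classical in
noncomputable def Fam (a : ℝ≥0∞) (U : Set ℂ) : ℕ → ℕ → ℤ × ℤ → Finset (ℕ × (ℤ × ℤ))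
  | 0, k, p => if costI a U k p = a ^ k then {(k, p)} else ∅
  | N + 1, k, p => if costI a U k p = a ^ k then {(k, p)} else
      (ch p).biUnion fun c => Fam a U N (k + 1) c

theorem sum_biUnion_le' {ι κ : Type*} [DecidableEq κ] (s : Finset ι) (t : ι → Finset κ)
    (f : κ → ℝ≥0∞) : ∑ q ∈ s.biUnion t, f q ≤ ∑ c ∈ s, ∑ q ∈ t c, f q := by
  classical
  induction s using Finset.induction_on with
  | empty => simp
  | insert c s hc ih =>
    rw [Finset.biUnion_insert, Finset.sum_insert hc]
    refine le_trans ?_ (add_le_add_right ih _)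
    rw [← Finset.sum_union_inter]
    exact le_self_add

theorem Fam_sum (a : ℝ≥0∞) (ha : 1 ≤ 4 * a) (U : Set ℂ) (N k : ℕ) (p : ℤ × ℤ) :
    ∑ q ∈ Fam a U N k p, a ^ q.1 ≤ costI a U k p := by
  induction N generalizing k p with
  | zero =>
    rw [Fam]; split_ifs with h
    · simp [h]
    · simp
  | succ N ih =>
    rw [Fam]; split_ifs with h
    · simp [h]
    · refine le_trans ?_ (costI_step a ha U k p h)
      refine (sum_biUnion_le' _ _ _).trans ?_
      exact Finset.sum_le_sum fun c _ => ih _ _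

theorem Fam_mono (a : ℝ≥0∞) (U : Set ℂ) (N k : ℕ) (p : ℤ × ℤ) :
    Fam a U N k p ⊆ Fam a U (N + 1) k p := by
  induction N generalizing k p with
  | zero =>
    rw [Fam, Fam]; split_ifs with h <;> simp
  | succ N ih =>
    rw [Fam, Fam]; split_ifs with h
    · simp
    · exact Finset.biUnion_mono fun c _ => ih _ _

theorem Fam_cover (a : ℝ≥0∞) (U : Set ℂ) (j k : ℕ) (z : ℂ) (hz : Q (k + j) (idx (k + j) z) ⊆ U) :
    ∃ q ∈ Fam a U j k (idx k z), z ∈ Q q.1 q.2 := by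
  induction j generalizing k with
  | zero =>
    rw [Fam, if_pos]
    · exact ⟨_, Finset.mem_singleton_self _, rfl⟩
    · refine le_antisymm (iSup_le fun d => cost_le _ _ _ _ _) ?_
      refine le_trans ?_ (le_iSup _ 0)
      rw [cost, if_pos]
      exact hz
  | succ j ih =>
    rw [Fam]
    split_ifs with h
    · exact ⟨_, Finset.mem_singleton_self _, rfl⟩
    · obtain ⟨q, hq, hzq⟩ := ih (k + 1) (by rwa [show k + 1 + j = k + (j + 1) by ring])
      refine ⟨q, Finset.mem_biUnion.2 ⟨_, ?_, hq⟩, hzq⟩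
      rw [mem_ch, par_idx]

/-- covering conclusion -/
theorem exists_cover (a : ℝ≥0∞) (ha : 1 ≤ 4 * a) (U : Set ℂ) (p : ℤ × ℤ) (ε : ℝ≥0∞)
    (hε : ∀ d, cost a U d 0 p ≤ ε) (K : Set ℂ) (hK : K ⊆ Q 0 p)
    (hKU : ∀ z ∈ K, ∃ k, Q k (idx k z) ⊆ U) :
    ∃ F : Set (ℕ × (ℤ × ℤ)), K ⊆ ⋃ q : F, Q q.1.1 q.1.2 ∧ ∑' q : F, a ^ q.1.1 ≤ ε := by
  have hmono : Monotone fun N => Fam a U N 0 p := monotone_nat_of_le_succ fun N => Fam_mono a U N 0 p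
  refine ⟨{q | ∃ N, q ∈ Fam a U N 0 p}, ?_, ?_⟩
  · intro z hz
    obtain ⟨k, hk⟩ := hKU z hz
    obtain ⟨q, hq, hzq⟩ := Fam_cover a U k 0 z (by simpa using hk)
    rw [mem_Q.1 (hK hz)] at hq
    exact mem_iUnion.2 ⟨⟨q, k, hq⟩, hzq⟩
  · rw [ENNReal.tsum_eq_iSup_sum]
    refine iSup_le fun s => ?_
    have : ∃ N, ∀ q ∈ s, q.1 ∈ Fam a U N 0 p := by
      induction s using Finset.induction_on with
      | empty => exact ⟨0, by simp⟩
      | insert q s _ ih =>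
        obtain ⟨N, hN⟩ := ih
        obtain ⟨M, hM⟩ := q.2
        refine ⟨max N M, fun r hr => ?_⟩
        rcases Finset.mem_insert.1 hr with rfl | hr
        · exact hmono (le_max_right _ _) hM
        · exact hmono (le_max_left _ _) (hN r hr)
    obtain ⟨N, hN⟩ := this
    calc ∑ q ∈ s, a ^ q.1.1 = ∑ q ∈ s.map (Function.Embedding.subtype _), a ^ q.1 := by
          rw [Finset.sum_map]; rfl
      _ ≤ ∑ q ∈ Fam a U N 0 p, a ^ q.1 := by
        apply Finset.sum_le_sum_of_subset
        intro q hq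
        obtain ⟨r, hr, rfl⟩ := Finset.mem_map.1 hq
        exact hN r hr
      _ ≤ costI a U 0 p := Fam_sum a ha U N 0 p
      _ ≤ ε := iSup_le hε

noncomputable def pr (θ : ℝ) (z : ℂ) : ℝ := z.re * Real.cos θ + z.im * Real.sin θ

noncomputable def rot (θ t u : ℝ) : ℂ := Complex.exp (θ * Complex.I) * (t + u * Complex.I)

theorem pr_rot (θ t u : ℝ) : pr θ (rot θ t u) = t := by
  have := Real.sin_sq_add_cos_sq θ
  simp only [pr, rot, Complex.mul_re, Complex.mul_im, Complex.exp_ofReal_mul_I_re,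
    Complex.exp_ofReal_mul_I_im, Complex.add_re, Complex.add_im, Complex.ofReal_re,
    Complex.ofReal_im, Complex.I_re, Complex.I_im]
  linear_combination t * this

theorem norm_exp_I (θ : ℝ) : ‖Complex.exp (θ * Complex.I)‖ = 1 := Complex.norm_exp_ofReal_mul_I θ

theorem mp_mul (c : ℂ) (hc : ‖c‖ = 1) : MeasurePreserving (fun z : ℂ => c * z) := by
  have h := (rotation ⟨c, by simp [Submonoid.unitSphere, hc]⟩).measurePreserving
  exact h

theorem lintegral_rot (θ : ℝ) (φ : ℂ → ℝ≥0∞) (hφ : Measurable φ) :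
    ∫⁻ z, φ z = ∫⁻ t : ℝ, ∫⁻ u : ℝ, φ (rot θ t u) := by
  rw [← (mp_mul _ (norm_exp_I θ)).lintegral_comp hφ,
    ← (Complex.volume_preserving_equiv_real_prod.symm).lintegral_comp (by fun_prop),
    Measure.volume_eq_prod, lintegral_prod]
  · congr! with t u
    simp [rot, Complex.measurableEquivRealProd_symm_apply, Complex.mk_eq_add_mul_I]
  · refine Measurable.aemeasurable ?_
    have := Complex.measurableEquivRealProd.symm.measurable
    fun_prop

theorem mp_affine (z c : ℂ) (hc : ‖c‖ = 1) : MeasurePreserving (fun ζ : ℂ => z + c * ζ) :=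
  (measurePreserving_add_left volume z).comp (mp_mul c hc)

noncomputable def Cst (a : ℝ≥0∞) : ℝ≥0∞ := 1 + ∑' k : ℕ, 2 ^ (k + 1) * (9 * a ^ k)

theorem Cst_lt_top (a : ℝ≥0∞) (ha : 2 * a < 1) : Cst a < ∞ := by
  have : ∀ k : ℕ, 2 ^ (k + 1) * (9 * a ^ k) = 18 * (2 * a) ^ k := by
    intro k; rw [mul_pow]; ring
  unfold Cst
  simp_rw [this]
  rw [ENNReal.tsum_mul_left, ENNReal.tsum_geometric]
  refine ENNReal.add_lt_top.2 ⟨by simp, ENNReal.mul_lt_top (by simp) ?_⟩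
  rw [ENNReal.inv_lt_top]
  exact tsub_pos_of_lt ha

theorem inv_norm_le (ζ : ℂ) : ENNReal.ofReal ‖ζ‖⁻¹ ≤
    1 + ∑' k : ℕ, 2 ^ (k + 1) * {ζ : ℂ | ‖ζ‖ ≤ 2⁻¹ ^ k}.indicator (fun _ => 1) ζ := by
  rcases eq_or_ne ζ 0 with rfl | h0
  · simp
  have hpos : 0 < ‖ζ‖ := norm_pos_iff.2 h0
  rcases le_total 1 ‖ζ‖ with h1 | h1
  · refine le_trans ?_ le_self_add
    rw [← ENNReal.ofReal_one]
    exact ENNReal.ofReal_le_ofReal (inv_le_one_of_one_le₀ h1)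
  · obtain ⟨n, hn1, hn2⟩ := exists_nat_pow_near_of_lt_one hpos h1 (y := (2:ℝ)⁻¹) (by norm_num)
      (by norm_num)
    refine le_trans ?_ le_add_self
    refine le_trans ?_ (ENNReal.le_tsum n)
    rw [indicator_of_mem (by exact hn2), mul_one]
    have : (2:ℝ≥0∞) ^ (n + 1) = ENNReal.ofReal (2 ^ (n + 1)) := by
      rw [ENNReal.ofReal_pow (by norm_num)]; norm_num
    rw [this]
    apply ENNReal.ofReal_le_ofReal
    rw [inv_pow] at hn1
    exact inv_le_of_inv_le₀ (by positivity) hn1.le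

theorem potential_le (a : ℝ≥0∞) (h : ℂ → ℝ≥0∞) (hm : Measurable h) (h1 : ∫⁻ z, h z ≤ 1)
    (hb : ∀ k p, ∫⁻ z in Q k p, h z ≤ a ^ k) (z c : ℂ) (hc : ‖c‖ = 1) :
    ∫⁻ ζ, h (z + c * ζ) * ENNReal.ofReal ‖ζ‖⁻¹ ≤ Cst a := by
  have hmS : ∀ k : ℕ, MeasurableSet {ζ : ℂ | ‖ζ‖ ≤ 2⁻¹ ^ k} := fun k =>
    measurableSet_le measurable_norm measurable_const
  calc ∫⁻ ζ, h (z + c * ζ) * ENNReal.ofReal ‖ζ‖⁻¹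
      ≤ ∫⁻ ζ, (h (z + c * ζ) + ∑' k : ℕ, 2 ^ (k + 1) *
          {ζ : ℂ | ‖ζ‖ ≤ 2⁻¹ ^ k}.indicator (fun ζ => h (z + c * ζ)) ζ) := by
        apply lintegral_mono
        intro ζ
        refine (mul_le_mul_right (inv_norm_le ζ) _).trans ?_
        rw [mul_add, mul_one, ← ENNReal.tsum_mul_left]
        refine add_le_add le_rfl (ENNReal.tsum_le_tsum fun k => ?_)
        by_cases hζ : ζ ∈ {ζ : ℂ | ‖ζ‖ ≤ 2⁻¹ ^ k}
        · rw [indicator_of_mem hζ, indicator_of_mem hζ]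
          exact le_of_eq (by ring)
        · rw [indicator_of_notMem hζ, indicator_of_notMem hζ]; simp
    _ = (∫⁻ ζ, h (z + c * ζ)) + ∑' k : ℕ, 2 ^ (k + 1) *
          ∫⁻ ζ, {ζ : ℂ | ‖ζ‖ ≤ 2⁻¹ ^ k}.indicator (fun ζ => h (z + c * ζ)) ζ := by
        have hk : ∀ k : ℕ, Measurable ({ζ : ℂ | ‖ζ‖ ≤ 2⁻¹ ^ k}.indicator
          (fun ζ => h (z + c * ζ))) := fun k => Measurable.indicator (by fun_prop) (hmS k)
        rw [lintegral_add_left (by fun_prop), lintegral_tsum]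
        · congr! 3 with k
          rw [lintegral_const_mul _ (hk k)]
        · intro k
          exact ((hk k).const_mul _).aemeasurable
    _ ≤ Cst a := by
        unfold Cst
        refine add_le_add ?_ (ENNReal.tsum_le_tsum fun k => mul_le_mul_right ?_ _)
        · rw [(mp_affine z c hc).lintegral_comp hm]; exact h1
        · have : ∀ ζ, {ζ : ℂ | ‖ζ‖ ≤ 2⁻¹ ^ k}.indicator (fun ζ => h (z + c * ζ)) ζ =
              {y : ℂ | ‖y - z‖ ≤ 2⁻¹ ^ k}.indicator h (z + c * ζ) := by
            intro ζ
            simp [indicator, hc]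
          simp_rw [this]
          have hmB : MeasurableSet {y : ℂ | ‖y - z‖ ≤ 2⁻¹ ^ k} :=
            measurableSet_le (by fun_prop) measurable_const
          rw [(mp_affine z c hc).lintegral_comp (hm.indicator hmB), lintegral_indicator hmB]
          refine (lintegral_mono_set (ball_subset k z)).trans ?_
          rw [← withDensity_apply _ (Finset.measurableSet_biUnion _ fun e _ => measurableSet_Q _ _)]
          refine (measure_biUnion_finset_le _ _).trans ?_
          simp_rw [withDensity_apply _ (measurableSet_Q _ _)]
          refine (Finset.sum_le_sum fun e _ => hb k _).trans ?_
          simp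

theorem polar_le (φ : ℂ → ℝ≥0∞) (hφ : Measurable φ) :
    ∫⁻ θ in Ioo (-Real.pi) Real.pi, ∫⁻ w in Ioi (0:ℝ), φ (w * Complex.exp (θ * Complex.I)) =
      ∫⁻ ζ, φ ζ * ENNReal.ofReal ‖ζ‖⁻¹ := by
  rw [← Complex.lintegral_comp_polarCoord_symm, polarCoord_target, Measure.volume_eq_prod,
    ← Measure.prod_restrict, lintegral_prod_symm]
  · congr! 1 with θ
    funext θ
    apply setLIntegral_congr_fun measurableSet_Ioi
    intro w hw
    have hw' : (0:ℝ) < w := hw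
    have e : Complex.polarCoord.symm (w, θ) = w * Complex.exp (θ * Complex.I) := by
      rw [Complex.polarCoord_symm_apply, Complex.exp_mul_I]; push_cast; rfl
    beta_reduce
    rw [e, norm_mul, norm_exp_I, mul_one, Complex.norm_real, Real.norm_of_nonneg hw'.le, smul_eq_mul,
      mul_left_comm, ← ENNReal.ofReal_mul hw'.le, mul_inv_cancel₀ hw'.ne', ENNReal.ofReal_one,
      mul_one]
  · refine Measurable.aemeasurable ?_
    have : Measurable fun p : ℝ × ℝ => Complex.polarCoord.symm p := by
      simp_rw [Complex.polarCoord_symm_apply]; fun_prop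
    fun_prop

theorem line_split (f : ℝ → ℝ≥0∞) :
    ∫⁻ w, f w = (∫⁻ w in Ioi (0:ℝ), f w) + ∫⁻ w in Ioi (0:ℝ), f (-w) := by
  rw [← lintegral_add_compl f (measurableSet_Ioi (a := (0:ℝ)))]
  congr 1
  rw [compl_Ioi, ← lintegral_indicator measurableSet_Iic, ← lintegral_neg_eq_self,
    setLIntegral_congr Ioi_ae_eq_Ici, ← lintegral_indicator measurableSet_Ici]
  congr 1
  funext w
  simp [indicator]

theorem inner_le (a : ℝ≥0∞) (h : ℂ → ℝ≥0∞) (hm : Measurable h) (h1 : ∫⁻ z, h z ≤ 1)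
    (hb : ∀ k p, ∫⁻ z in Q k p, h z ≤ a ^ k) (z : ℂ) :
    ∫⁻ θ in Ioo (-Real.pi) Real.pi, ∫⁻ w : ℝ, h (z + w * (Complex.I * Complex.exp (θ * Complex.I)))
      ≤ 2 * Cst a := by
  simp_rw [line_split]
  rw [lintegral_add_left, two_mul]
  · gcongr
    · refine le_trans (le_of_eq ?_) (potential_le a h hm h1 hb z Complex.I (by simp))
      rw [← polar_le (fun ζ => h (z + Complex.I * ζ)) (by fun_prop)]
      congr! 6; ring
    · refine le_trans (le_of_eq ?_) (potential_le a h hm h1 hb z (-Complex.I) (by simp))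
      rw [← polar_le (fun ζ => h (z + -Complex.I * ζ)) (by fun_prop)]
      congr! 6; push_cast; ring
  · apply Measurable.lintegral_prod_right
    fun_prop

theorem energy_le (a : ℝ≥0∞) (h : ℂ → ℝ≥0∞) (hm : Measurable h) (h1 : ∫⁻ z, h z ≤ 1)
    (hb : ∀ k p, ∫⁻ z in Q k p, h z ≤ a ^ k) :
    ∫⁻ θ in Ioo (-Real.pi) Real.pi, ∫⁻ t : ℝ, (∫⁻ u : ℝ, h (rot θ t u)) ^ 2 ≤
      2 * Cst a * ∫⁻ z, h z := by
  have key : ∀ θ : ℝ, ∫⁻ t : ℝ, (∫⁻ u : ℝ, h (rot θ t u)) ^ 2 =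
      ∫⁻ z, h z * ∫⁻ w : ℝ, h (z + w * (Complex.I * Complex.exp (θ * Complex.I))) := by
    intro θ
    rw [lintegral_rot θ]
    · congr 1
      funext t
      have hmr : Measurable fun u => h (rot θ t u) := by unfold rot; fun_prop
      rw [pow_two, ← lintegral_mul_const _ hmr]
      congr 1
      funext u
      congr 1
      rw [← lintegral_add_left_eq_self _ u]
      congr! 3 with w
      simp only [rot]; push_cast; ring
    · apply hm.mul
      apply Measurable.lintegral_prod_right
      fun_prop
  simp_rw [key]
  rw [lintegral_lintegral_swap]
  · rw [← lintegral_const_mul _ hm]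
    apply lintegral_mono
    intro z
    beta_reduce
    rw [lintegral_const_mul, mul_comm]
    · gcongr
      exact inner_le a h hm h1 hb z
    · apply Measurable.lintegral_prod_right
      fun_prop
  · refine Measurable.aemeasurable ?_
    apply Measurable.mul
    · fun_prop
    · apply Measurable.lintegral_prod_right
      fun_prop

theorem measurable_pr : Measurable fun q : ℝ × ℂ => (q.1, pr q.1 q.2) := by
  unfold pr; fun_prop

/-- main dual estimate -/
theorem dual_le (a : ℝ≥0∞) (h : ℂ → ℝ≥0∞) (hm : Measurable h) (h1 : ∫⁻ z, h z ≤ 1)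
    (hb : ∀ k p, ∫⁻ z in Q k p, h z ≤ a ^ k) (G : Set (ℝ × ℝ)) (hG : MeasurableSet G)
    (lam : ℝ≥0∞) (hl0 : lam ≠ 0) (hl : lam ≠ ∞) :
    ∫⁻ z, h z * volume {θ | θ ∈ Ioo (-Real.pi) Real.pi ∧ (θ, pr θ z) ∈ G} ≤
      lam * volume G + lam⁻¹ * (2 * Cst a * ∫⁻ z, h z) := by
  have hGi : Measurable (G.indicator fun _ => (1:ℝ≥0∞)) := measurable_const.indicator hG
  have e1 : ∀ z, volume {θ | θ ∈ Ioo (-Real.pi) Real.pi ∧ (θ, pr θ z) ∈ G} =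
      ∫⁻ θ in Ioo (-Real.pi) Real.pi, G.indicator (fun _ => 1) (θ, pr θ z) := by
    intro z
    have hmz : Measurable fun θ : ℝ => (θ, pr θ z) := by unfold pr; fun_prop
    rw [← lintegral_indicator measurableSet_Ioo, ← lintegral_indicator_one]
    · congr 1
      funext θ
      simp only [indicator, mem_ofPred_eq, Pi.one_apply]
      split_ifs <;> simp_all
    · exact measurableSet_Ioo.inter (hmz hG)
  have e2 : ∫⁻ z, h z * volume {θ | θ ∈ Ioo (-Real.pi) Real.pi ∧ (θ, pr θ z) ∈ G} =
      ∫⁻ θ in Ioo (-Real.pi) Real.pi, ∫⁻ t : ℝ,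
        G.indicator (fun _ => 1) (θ, t) * ∫⁻ u : ℝ, h (rot θ t u) := by
    simp_rw [e1]
    calc _ = ∫⁻ z, ∫⁻ θ in Ioo (-Real.pi) Real.pi, h z * G.indicator (fun _ => 1) (θ, pr θ z) := by
          congr 1
          funext z
          rw [lintegral_const_mul]
          exact hGi.comp (by unfold pr; fun_prop)
      _ = ∫⁻ θ in Ioo (-Real.pi) Real.pi, ∫⁻ z, h z * G.indicator (fun _ => 1) (θ, pr θ z) := by
          rw [lintegral_lintegral_swap]
          refine Measurable.aemeasurable ?_
          apply Measurable.mul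
          · fun_prop
          · exact hGi.comp (by unfold pr; fun_prop)
      _ = _ := by
          congr 1
          funext θ
          rw [lintegral_rot θ]
          · congr 1
            funext t
            have hmr : Measurable fun u => h (rot θ t u) := by unfold rot; fun_prop
            simp_rw [pr_rot]
            rw [lintegral_mul_const _ hmr, mul_comm]
          · exact hm.mul (hGi.comp (by unfold pr; fun_prop))
  rw [e2]
  have hP : Measurable fun q : ℝ × ℝ => ∫⁻ u : ℝ, h (rot q.1 q.2 u) := by
    apply Measurable.lintegral_prod_right
    unfold rot; fun_prop
  calc _ ≤ ∫⁻ θ in Ioo (-Real.pi) Real.pi, ∫⁻ t : ℝ,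
        (lam * G.indicator (fun _ => 1) (θ, t) + lam⁻¹ * (∫⁻ u : ℝ, h (rot θ t u)) ^ 2) := by
        gcongr with θ t
        set P := ∫⁻ u : ℝ, h (rot θ t u)
        by_cases hq : (θ, t) ∈ G
        · rw [indicator_of_mem hq, one_mul, mul_one]
          rcases le_total P lam with hP | hP
          · exact hP.trans le_self_add
          · refine le_trans ?_ le_add_self
            calc P = lam⁻¹ * (lam * P) := by
                  rw [← mul_assoc, ENNReal.inv_mul_cancel hl0 hl, one_mul]
              _ ≤ lam⁻¹ * (P * P) := by gcongr
              _ = _ := by rw [pow_two]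
        · rw [indicator_of_notMem hq]; simp
    _ = lam * (∫⁻ θ in Ioo (-Real.pi) Real.pi, ∫⁻ t : ℝ, G.indicator (fun _ => 1) (θ, t)) +
        lam⁻¹ * ∫⁻ θ in Ioo (-Real.pi) Real.pi, ∫⁻ t : ℝ, (∫⁻ u : ℝ, h (rot θ t u)) ^ 2 := by
        have m1 : Measurable fun θ : ℝ => ∫⁻ t : ℝ, G.indicator (fun _ => (1:ℝ≥0∞)) (θ, t) :=
          Measurable.lintegral_prod_right (by exact hGi)
        have m2 : Measurable fun θ : ℝ => ∫⁻ t : ℝ, (∫⁻ u : ℝ, h (rot θ t u)) ^ 2 :=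
          Measurable.lintegral_prod_right (by exact hP.pow_const 2)
        rw [← lintegral_const_mul _ m1, ← lintegral_const_mul _ m2,
          ← lintegral_add_left (m1.const_mul _)]
        congr 1
        funext θ
        have m3 : Measurable fun t : ℝ => G.indicator (fun _ => (1:ℝ≥0∞)) (θ, t) :=
          hGi.comp (by fun_prop)
        have m4 : Measurable fun t : ℝ => (∫⁻ u : ℝ, h (rot θ t u)) ^ 2 :=
          (hP.comp (by fun_prop : Measurable fun t : ℝ => (θ, t))).pow_const 2
        rw [lintegral_add_left (m3.const_mul _), lintegral_const_mul _ m3,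
          lintegral_const_mul _ m4]
    _ ≤ _ := by
        gcongr
        · refine (setLIntegral_le_lintegral _ _).trans (le_of_eq ?_)
          rw [← lintegral_prod _ hGi.aemeasurable, ← Measure.volume_eq_prod,
            lintegral_indicator_const hG, one_mul]
        · exact energy_le a h hm h1 hb

theorem cost_bound (a : ℝ≥0∞) (ha : 1 ≤ 4 * a) (ha2 : 2 * a < 1) (G : Set (ℝ × ℝ))
    (hG : MeasurableSet G) (δ : ℝ≥0∞) (hδ : δ ≠ 0) (hδ' : δ ≠ ∞) (d : ℕ) (p : ℤ × ℤ) :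
    cost a {z | δ < volume {θ | θ ∈ Ioo (-Real.pi) Real.pi ∧ (θ, pr θ z) ∈ G}} d 0 p ≤
      2 * δ⁻¹ * (4 * Cst a * δ⁻¹) * volume G := by
  have ha1 : a ≤ 1 := by
    refine le_trans ?_ ha2.le
    rw [two_mul]; exact le_self_add
  set U := {z | δ < volume {θ | θ ∈ Ioo (-Real.pi) Real.pi ∧ (θ, pr θ z) ∈ G}} with hU
  obtain ⟨h, hm, -, hsupp, hmass, hb⟩ := exists_density a ha ha1 U d 0 p
  have h1 : ∫⁻ z, h z ≤ 1 := by
    rw [hmass]; simpa using cost_le a U d 0 p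
  rw [← hmass]
  set M := ∫⁻ z, h z with hM
  have hC0 : Cst a ≠ 0 := by unfold Cst; simp
  have hC : Cst a ≠ ∞ := (Cst_lt_top a ha2).ne
  have hMtop : M ≠ ∞ := (h1.trans_lt (by simp)).ne
  have hδi : δ⁻¹ ≠ ∞ := by simpa using hδ
  have hδi0 : δ⁻¹ ≠ 0 := by simpa using hδ'
  have h2 := dual_le a h hm h1 hb G hG (4 * Cst a * δ⁻¹) (by simp [hC0, hδ'])
    (ENNReal.mul_ne_top (ENNReal.mul_ne_top (by simp) hC) hδi)
  have h3 : δ * M ≤ ∫⁻ z, h z * volume {θ | θ ∈ Ioo (-Real.pi) Real.pi ∧ (θ, pr θ z) ∈ G} := by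
    rw [hM, ← lintegral_const_mul _ hm]
    apply lintegral_mono
    intro z
    beta_reduce
    by_cases hz : z ∈ U
    · rw [mul_comm]
      gcongr
      exact le_of_lt hz
    · rw [hsupp z hz]; simp
  have h4 : (4 * Cst a * δ⁻¹)⁻¹ * (2 * Cst a * M) = δ * M / 2 := by
    rw [ENNReal.mul_inv (Or.inr hδi) (Or.inr hδi0), inv_inv,
      ENNReal.mul_inv (Or.inr hC) (Or.inr hC0)]
    have h42 : (4:ℝ≥0∞)⁻¹ * 2 = 2⁻¹ := by
      rw [show (4:ℝ≥0∞) = 2 * 2 by norm_num, ENNReal.mul_inv (by simp) (by simp), mul_assoc,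
        ENNReal.inv_mul_cancel (by simp) (by simp), mul_one]
    calc (4:ℝ≥0∞)⁻¹ * (Cst a)⁻¹ * δ * (2 * Cst a * M)
        = (4⁻¹ * 2) * ((Cst a)⁻¹ * Cst a) * (δ * M) := by ring
      _ = _ := by rw [h42, ENNReal.inv_mul_cancel hC0 hC, div_eq_mul_inv]; ring
  rw [← hM, h4] at h2
  have h5 := h3.trans h2
  have h6 : δ * M / 2 ≤ 4 * Cst a * δ⁻¹ * volume G := by
    have : δ * M / 2 + δ * M / 2 ≤ 4 * Cst a * δ⁻¹ * volume G + δ * M / 2 := by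
      rwa [ENNReal.add_halves]
    exact (ENNReal.add_le_add_iff_right
      (ENNReal.div_ne_top (ENNReal.mul_ne_top hδ' hMtop) (by simp))).1 this
  calc M = 2 * δ⁻¹ * (δ * M / 2) := by
        rw [div_eq_mul_inv]
        calc M = (2 * 2⁻¹) * (δ⁻¹ * δ) * M := by
              rw [ENNReal.inv_mul_cancel hδ hδ', ENNReal.mul_inv_cancel (by simp) (by simp)]; simp
          _ = _ := by ring
    _ ≤ 2 * δ⁻¹ * (4 * Cst a * δ⁻¹ * volume G) := by gcongr
    _ = _ := by ring

theorem exists_cube (G : Set (ℝ × ℝ)) (hG : IsOpen G) (δ : ℝ≥0∞) (z : ℂ)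
    (hz : δ < volume {θ | θ ∈ Ioo (-Real.pi) Real.pi ∧ (θ, pr θ z) ∈ G}) :
    ∃ k, Q k (idx k z) ⊆
      {z | δ < volume {θ | θ ∈ Ioo (-Real.pi) Real.pi ∧ (θ, pr θ z) ∈ G}} := by
  let S : ℕ → Set ℝ := fun k =>
    {θ | θ ∈ Ioo (-Real.pi) Real.pi ∧ ∀ y ∈ Q k (idx k z), (θ, pr θ y) ∈ G}
  have hS : Monotone S := by
    apply monotone_nat_of_le_succ
    intro k θ hθ
    refine ⟨hθ.1, fun y hy => hθ.2 y ?_⟩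
    have := Q_subset_par _ _ hy
    rwa [par_idx] at this
  have hU : {θ | θ ∈ Ioo (-Real.pi) Real.pi ∧ (θ, pr θ z) ∈ G} ⊆ ⋃ k, S k := by
    intro θ hθ
    have hcont : Continuous fun y : ℂ => (θ, pr θ y) := by unfold pr; fun_prop
    have hnb := (hG.preimage hcont).mem_nhds hθ.2
    obtain ⟨r, hr, hrs⟩ := EMetric.mem_nhds_iff.1 hnb
    have hlim : Tendsto (fun k : ℕ => 2 * (2⁻¹ : ℝ≥0∞) ^ k) atTop (𝓝 0) := by
      have := ENNReal.Tendsto.const_mul (a := 2)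
        (ENNReal.tendsto_pow_atTop_nhds_zero_of_lt_one (r := 2⁻¹) (by simp)) (Or.inr (by simp))
      simpa using this
    obtain ⟨k, hk⟩ := (hlim.eventually_lt_const hr).exists
    refine mem_iUnion.2 ⟨k, hθ.1, fun y hy => hrs ?_⟩
    have hzk : z ∈ Q k (idx k z) := rfl
    exact ((Metric.edist_le_ediam_of_mem hy hzk).trans (ediam_Q _ _)).trans_lt hk
  have h1 := hz.trans_le (measure_mono hU)
  rw [hS.measure_iUnion] at h1
  obtain ⟨k, hk⟩ := lt_iSup_iff.1 h1
  refine ⟨k, fun y hy => hk.trans_le (measure_mono ?_)⟩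
  intro θ hθ
  exact ⟨hθ.1, hθ.2 y hy⟩

theorem hausdorff_zero (s : ℝ) (hs : 0 < s) (K : Set ℂ)
    (h : ∀ ε : ℝ≥0∞, ε ≠ 0 → ∃ F : Set (ℕ × (ℤ × ℤ)), K ⊆ ⋃ q : F, Q q.1.1 q.1.2 ∧
      ∑' q : F, ((2⁻¹ : ℝ≥0∞) ^ s) ^ q.1.1 ≤ ε) : μH[s] K = 0 := by
  have hpow : ∀ k : ℕ, ((2⁻¹ : ℝ≥0∞) ^ s) ^ k = ((2⁻¹ : ℝ≥0∞) ^ k) ^ s := by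
    intro k
    rw [← ENNReal.rpow_natCast, ← ENNReal.rpow_natCast, ← ENNReal.rpow_mul, ← ENNReal.rpow_mul,
      mul_comm]
  choose F hF1 hF2 using fun n : ℕ => h ((2⁻¹ : ℝ≥0∞) ^ n) (pow_ne_zero _ (by simp))
  have hlim0 : Tendsto (fun k : ℕ => (2⁻¹ : ℝ≥0∞) ^ k) atTop (𝓝 0) :=
    ENNReal.tendsto_pow_atTop_nhds_zero_of_lt_one (r := 2⁻¹) (by simp)
  have hr : Tendsto (fun n : ℕ => 2 * ((2⁻¹ : ℝ≥0∞) ^ n) ^ (1 / s)) atTop (𝓝 0) := by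
    have h1 := (ENNReal.continuous_rpow_const (y := 1 / s)).tendsto 0 |>.comp hlim0
    rw [ENNReal.zero_rpow_of_pos (by positivity)] at h1
    simpa using ENNReal.Tendsto.const_mul (a := 2) h1 (Or.inr (by simp))
  have key := Measure.hausdorffMeasure_le_liminf_tsum (ι := fun n => F n) s K (l := atTop)
    (fun n : ℕ => 2 * ((2⁻¹ : ℝ≥0∞) ^ n) ^ (1 / s)) hr (fun n (q : F n) => Q q.1.1 q.1.2)
    (Eventually.of_forall ?_) (Eventually.of_forall hF1)
  · have h2 : Tendsto (fun n : ℕ => 2 ^ s * (2⁻¹ : ℝ≥0∞) ^ n) atTop (𝓝 0) := by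
      simpa using ENNReal.Tendsto.const_mul (a := 2 ^ s) hlim0
        (Or.inr (ENNReal.rpow_ne_top_of_nonneg hs.le (by simp)))
    refine nonpos_iff_eq_zero.1 (key.trans ?_)
    rw [← h2.liminf_eq]
    refine liminf_le_liminf (Eventually.of_forall fun n => ?_)
    calc ∑' q : F n, Metric.ediam (Q q.1.1 q.1.2) ^ s
        ≤ ∑' q : F n, 2 ^ s * ((2⁻¹ : ℝ≥0∞) ^ s) ^ q.1.1 := by
          refine ENNReal.tsum_le_tsum fun q => ?_
          rw [hpow, ← ENNReal.mul_rpow_of_nonneg _ _ hs.le]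
          exact ENNReal.rpow_le_rpow (ediam_Q _ _) hs.le
      _ ≤ _ := by
          rw [ENNReal.tsum_mul_left]
          gcongr
          exact hF2 n
  · intro n q
    refine (ediam_Q _ _).trans ?_
    gcongr
    have h3 := (ENNReal.le_tsum q).trans (hF2 n)
    rw [hpow] at h3
    have h4 := ENNReal.rpow_le_rpow h3 (z := 1 / s) (by positivity)
    rwa [← ENNReal.rpow_mul, mul_one_div_cancel hs.ne', ENNReal.rpow_one] at h4

theorem core (K : Set ℂ) (hK : MeasurableSet K) (p : ℤ × ℤ) (hKp : K ⊆ Q 0 p) (s : ℝ) (hs : 1 < s)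
    (hs2 : s ≤ 2) (hH : μH[s] K ≠ 0) :
    ∀ᵐ θ ∂(volume.restrict (Ioo (-Real.pi) Real.pi)), 0 < volume (pr θ '' K) := by
  set a : ℝ≥0∞ := 2⁻¹ ^ s with ha_def
  have ha : 1 ≤ 4 * a := by
    have h1 : (2⁻¹ : ℝ≥0∞) ^ (2:ℝ) ≤ a := ENNReal.rpow_le_rpow_of_exponent_ge (by simp) hs2
    calc (1:ℝ≥0∞) = 4 * 2⁻¹ ^ (2:ℝ) := by
          rw [ENNReal.rpow_two, ← ENNReal.inv_pow, show (2:ℝ≥0∞) ^ 2 = 4 by norm_num,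
            ENNReal.mul_inv_cancel (by simp) (by simp)]
      _ ≤ _ := by gcongr
  have ha2 : 2 * a < 1 := by
    have h1 : a < (2⁻¹ : ℝ≥0∞) ^ (1:ℝ) :=
      ENNReal.rpow_lt_rpow_of_exponent_gt (by simp) (by simp) hs
    calc 2 * a < 2 * (2⁻¹ : ℝ≥0∞) ^ (1:ℝ) := by
          rw [ENNReal.mul_lt_mul_iff_right (by simp) (by simp)]; exact h1
      _ = 1 := by rw [ENNReal.rpow_one, ENNReal.mul_inv_cancel (by simp) (by simp)]
  -- the graph of projections
  set N : Set (ℝ × ℝ) := (fun q : ℝ × ℂ => (q.1, pr q.1 q.2)) '' (univ ×ˢ K) with hN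
  have hNa : AnalyticSet N := (MeasurableSet.univ.prod hK).analyticSet_image measurable_pr
  have hNn : NullMeasurableSet N volume := analytic_nullMeasurable _ _ hNa
  set T := toMeasurable volume N with hT
  have hTm : MeasurableSet T := measurableSet_toMeasurable _ _
  have hNT : N ⊆ T := subset_toMeasurable _ _
  have hTN : T =ᵐ[volume] N := hNn.toMeasurable_ae_eq
  set Th : Set ℝ := {θ | volume (Prod.mk θ ⁻¹' T) = 0} with hTh
  have hThm : MeasurableSet Th := measurable_measure_prodMk_left hTm (measurableSet_singleton 0)
  have hsec : ∀ θ, Prod.mk θ ⁻¹' N = pr θ '' K := by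
    intro θ
    ext t
    simp [hN]
  have hae : ∀ᵐ θ : ℝ, volume (pr θ '' K) = volume (Prod.mk θ ⁻¹' T) := by
    rw [Measure.volume_eq_prod] at hTN
    filter_upwards [Measure.ae_ae_of_ae_prod hTN] with θ hθ
    rw [← hsec]
    exact (measure_congr hθ).symm
  by_cases hm0 : volume (Th ∩ Ioo (-Real.pi) Real.pi) = 0
  · rw [ae_restrict_iff' measurableSet_Ioo]
    have h1 : ∀ᵐ θ : ℝ, θ ∉ Th ∩ Ioo (-Real.pi) Real.pi := measure_eq_zero_iff_ae_notMem.1 hm0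
    filter_upwards [h1, hae] with θ h1 h2 h3
    rw [h2, pos_iff_ne_zero]
    intro h0
    exact h1 ⟨h0, h3⟩
  exfalso
  apply hH
  apply hausdorff_zero s (by linarith) K
  intro ε hε
  set m := volume (Th ∩ Ioo (-Real.pi) Real.pi) with hm
  have hmtop : m ≠ ∞ := by
    refine ((measure_mono inter_subset_right).trans_lt ?_).ne
    rw [Real.volume_Ioo]; simp
  set δ := m / 2 with hδ
  have hδ0 : δ ≠ 0 := by simp [hδ, hm0]
  have hδt : δ ≠ ∞ := ENNReal.div_ne_top hmtop (by simp)
  have hδm : δ < m := ENNReal.half_lt_self hm0 hmtop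
  set B : Set (ℝ × ℝ) := T ∩ (Th ×ˢ univ) with hB
  have hBm : MeasurableSet B := hTm.inter (hThm.prod MeasurableSet.univ)
  have hB0 : volume B = 0 := by
    rw [Measure.volume_eq_prod, Measure.measure_prod_null hBm]
    refine Eventually.of_forall fun θ => ?_
    by_cases hθ : θ ∈ Th
    · exact measure_mono_null (fun t ht => ht.1) hθ
    · have : Prod.mk θ ⁻¹' B = ∅ := by
        ext t; simp [hB, hθ]
      simp [this]
  set A := 2 * δ⁻¹ * (4 * Cst a * δ⁻¹) with hA
  have hAt : A ≠ ∞ := by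
    have h1 : δ⁻¹ ≠ ∞ := by simpa using hδ0
    exact ENNReal.mul_ne_top (ENNReal.mul_ne_top (by simp) h1)
      (ENNReal.mul_ne_top (ENNReal.mul_ne_top (by simp) (Cst_lt_top a ha2).ne) h1)
  obtain ⟨η, hη0, hη⟩ := ENNReal.exists_nnreal_pos_mul_lt hAt hε
  obtain ⟨G, hBG, hGo, hGv⟩ := Set.exists_isOpen_lt_of_lt B (η : ℝ≥0∞) (μ := volume)
    (by rw [hB0]; exact_mod_cast hη0)
  refine exists_cover a ha _ p ε (fun d => (cost_bound a ha ha2 G hGo.measurableSet δ hδ0 hδt d p).trans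
    ?_) K hKp ?_
  · calc A * volume G ≤ A * η := by gcongr
      _ = η * A := mul_comm _ _
      _ ≤ ε := hη.le
  · intro z hz
    apply exists_cube G hGo δ z
    refine hδm.trans_le (measure_mono ?_)
    intro θ hθ
    refine ⟨hθ.2, hBG ⟨hNT ⟨(θ, z), ⟨mem_univ _, hz⟩, rfl⟩, hθ.1, mem_univ _⟩⟩

theorem planar (K : Set ℂ) (hK : MeasurableSet K) (hdim : 1 < dimH K) :
    ∀ᵐ θ : ℝ, 0 < volume (pr θ '' K) := by
  have hloc : ∀ᵐ θ ∂(volume.restrict (Ioo (-Real.pi) Real.pi)), 0 < volume (pr θ '' K) := by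
    obtain ⟨s, hs1, hs2⟩ := ENNReal.lt_iff_exists_nnreal_btwn.1
      (lt_min hdim (by norm_num : (1:ℝ≥0∞) < 2))
    have hH := hausdorffMeasure_of_lt_dimH (hs2.trans_le (min_le_left _ _))
    have hKU : K = ⋃ p : ℤ × ℤ, K ∩ Q 0 p := by
      ext z
      simp only [mem_iUnion, mem_inter_iff]
      exact ⟨fun h => ⟨idx 0 z, h, rfl⟩, fun ⟨_, h, _⟩ => h⟩
    have : ∃ p, μH[s] (K ∩ Q 0 p) ≠ 0 := by
      by_contra! hcon
      have := measure_iUnion_null hcon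
      rw [← hKU, hH] at this
      exact ENNReal.top_ne_zero this
    obtain ⟨p, hp⟩ := this
    filter_upwards [core (K ∩ Q 0 p) (hK.inter (measurableSet_Q _ _)) p inter_subset_right s
      (by exact_mod_cast hs1) (by exact_mod_cast (hs2.trans_le (min_le_right _ _)).le) hp] with θ hθ
    exact hθ.trans_le (measure_mono (image_mono inter_subset_left))
  rw [Measure.restrict_congr_set Ioo_ae_eq_Ico, ae_restrict_iff' measurableSet_Ico] at hloc
  have hall : ∀ᵐ θ : ℝ, ∀ m : ℤ, (θ + -(m • (2 * Real.pi))) ∈ Ico (-Real.pi) Real.pi →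
      0 < volume (pr (θ + -(m • (2 * Real.pi))) '' K) := by
    rw [ae_all_iff]
    intro m
    exact (measurePreserving_add_right volume (-(m • (2 * Real.pi)))).quasiMeasurePreserving.ae hloc
  filter_upwards [hall] with θ hθ
  obtain ⟨m, hm, -⟩ := existsUnique_sub_zsmul_mem_Ico Real.two_pi_pos θ (-Real.pi)
  have h1 := hθ m (by
    rw [← sub_eq_add_neg]
    rwa [show -Real.pi + 2 * Real.pi = Real.pi by ring] at hm)
  have h2 : pr (θ + -(m • (2 * Real.pi))) = pr θ := by
    funext z
    unfold pr
    rw [← sub_eq_add_neg, zsmul_eq_mul, Real.cos_sub_int_mul_two_pi, Real.sin_sub_int_mul_two_pi]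
  rwa [h2] at h1

end Marstrand




/-- Marstrand: If K ⊂ ℝ² is a Borel set with Hausdorff dimension > 1,
then for Lebesgue-almost every θ ∈ ℝ, the orthogonal projection of K onto the line L_θ
through the origin in direction v_θ = (cos θ, sin θ) has positive one-dimensional
Lebesgue measure. The line L_θ is identified isometrically with ℝ via t ↦ t • v_θ, so
that the orthogonal projection proj_θ becomes x ↦ ⟪x, v_θ⟫ = x₀ cos θ + x₁ sin θ and
arclength measure on L_θ becomes Lebesgue measure on ℝ. -/
theorem stmt_5 (K : Set (EuclideanSpace ℝ (Fin 2))) (hK : MeasurableSet K)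
    (hdim : 1 < dimH K) :
    ∀ᵐ θ ∂(volume : Measure ℝ),
      0 < volume ((fun x : EuclideanSpace ℝ (Fin 2) =>
        x 0 * Real.cos θ + x 1 * Real.sin θ) '' K) := by

  have himg : ∀ θ, (fun x : EuclideanSpace ℝ (Fin 2) =>
      x 0 * Real.cos θ + x 1 * Real.sin θ) '' K =
      Marstrand.pr θ '' (Complex.orthonormalBasisOneI.repr.symm '' K) := by
    intro θ
    rw [Set.image_image]
    congr! 2 with x
    simp [Marstrand.pr, Complex.orthonormalBasisOneI_repr_symm_apply]
  simp_rw [himg]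
  apply Marstrand.planar
  · exact Complex.orthonormalBasisOneI.repr.symm.toHomeomorph.toMeasurableEquiv.measurableSet_image.2 hK
  · rwa [Complex.orthonormalBasisOneI.repr.symm.isometry.dimH_image]
end

section
/- Let K ⊂ ℝ² be a Borel set with Hausdorff dimension d > 1 and m_d(K) < ∞. For θ ∈ ℝ let μ_θ = (proj_θ)_*(m_d ↾ K) be the pushforward onto the line L_θ of the restriction of m_d to K. Then for Lebesgue-almost every θ, the measure μ_θ is absolutely continuous with respect to the one-dimensional Lebesgue measure m on L_θ. -/
open MeasureTheory Filter Topology Set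
open scoped ENNReal

lemma geom_bound (a b ε s : ℝ) (hab : (a, b) ≠ (0, 0)) (hε : 0 ≤ ε) :
    volume {θ : ℝ | θ ∈ Icc s (s + 1) ∧ |a * Real.cos θ + b * Real.sin θ| ≤ ε}
      ≤ ENNReal.ofReal (2 * Real.pi * ε * (√(a ^ 2 + b ^ 2))⁻¹) := by
  have hr : 0 < a ^ 2 + b ^ 2 := by
    by_contra h
    apply hab
    have ha : a = 0 := by nlinarith [sq_nonneg a, sq_nonneg b]
    have hb : b = 0 := by nlinarith [sq_nonneg a, sq_nonneg b]
    simp [ha, hb]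
  have hr' : 0 < √(a ^ 2 + b ^ 2) := Real.sqrt_pos.2 hr
  refine (Real.volume_le_diam _).trans ?_
  refine Metric.ediam_le ?_
  rintro x ⟨⟨hx1, hx2⟩, hx⟩ y ⟨⟨hy1, hy2⟩, hy⟩
  rw [edist_dist]
  apply ENNReal.ofReal_le_ofReal
  rw [Real.dist_eq]
  set t := x - y with ht
  have h1 : a * Real.sin t = -(a * Real.cos x + b * Real.sin x) * Real.sin y
      + (a * Real.cos y + b * Real.sin y) * Real.sin x := by
    rw [ht, Real.sin_sub]; ring
  have h2 : b * Real.sin t = (a * Real.cos x + b * Real.sin x) * Real.cos y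
      - (a * Real.cos y + b * Real.sin y) * Real.cos x := by
    rw [ht, Real.sin_sub]; ring
  generalize a * Real.cos x + b * Real.sin x = p at *
  generalize a * Real.cos y + b * Real.sin y = q at *
  have h3 : (a ^ 2 + b ^ 2) * Real.sin t ^ 2 ≤ (2 * ε) ^ 2 := by
    have e : (a ^ 2 + b ^ 2) * Real.sin t ^ 2 = p ^ 2 + q ^ 2 - 2 * p * q * Real.cos t := by
      have : (a ^ 2 + b ^ 2) * Real.sin t ^ 2 = (a * Real.sin t) ^ 2 + (b * Real.sin t) ^ 2 := by
        ring
      rw [this, h1, h2, ht, Real.cos_sub]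
      have := Real.sin_sq_add_cos_sq x
      have := Real.sin_sq_add_cos_sq y
      grind
    have hp : p ^ 2 ≤ ε ^ 2 := sq_le_sq' (abs_le.1 hx).1 (abs_le.1 hx).2
    have hq : q ^ 2 ≤ ε ^ 2 := sq_le_sq' (abs_le.1 hy).1 (abs_le.1 hy).2
    have hc : |p * q * Real.cos t| ≤ ε * ε * 1 := by
      rw [abs_mul, abs_mul]
      gcongr
      exact Real.abs_cos_le_one t
    rw [e]
    nlinarith [(abs_le.1 hc).1]
  have h4 : √(a ^ 2 + b ^ 2) * |Real.sin t| ≤ 2 * ε := by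
    apply abs_le_of_sq_le_sq' _ (by positivity) |>.2
    rw [mul_pow, Real.sq_sqrt hr.le, sq_abs]; exact h3
  have h5 : 2 / Real.pi * |t| ≤ |Real.sin t| := by
    apply Real.mul_abs_le_abs_sin
    have : |t| ≤ 1 := abs_le.2 ⟨by linarith, by linarith⟩
    linarith [Real.pi_gt_three]
  rw [← div_eq_mul_inv, le_div_iff₀ hr']
  have hpi := Real.pi_pos
  have h6 : |t| ≤ Real.pi * |Real.sin t| := by
    have := mul_le_mul_of_nonneg_left h5 hpi.le
    have e : Real.pi * (2 / Real.pi * |t|) = 2 * |t| := by field_simp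
    have := abs_nonneg t
    linarith
  calc |t| * √(a ^ 2 + b ^ 2) ≤ (Real.pi * |Real.sin t|) * √(a ^ 2 + b ^ 2) := by gcongr
    _ = Real.pi * (√(a ^ 2 + b ^ 2) * |Real.sin t|) := by ring
    _ ≤ Real.pi * (2 * ε) := by gcongr
    _ = _ := by ring

lemma ac_crit (ν : Measure ℝ) [IsFiniteMeasure ν]
    (h : ∀ᵐ t ∂ν, liminf (fun n : ℕ => ((n : ℝ≥0∞) + 1) *
      ν (Metric.closedBall t (1 / ((n : ℝ) + 1)))) atTop < ⊤) : ν ≪ volume := by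
  have hD : ∀ᵐ t ∂ν, (volume : Measure ℝ).rnDeriv ν t ≠ 0 := by
    filter_upwards [h, Besicovitch.ae_tendsto_rnDeriv (volume : Measure ℝ) ν] with t ht hlim h0
    rw [h0] at hlim
    have hr : Tendsto (fun n : ℕ => 1 / ((n : ℝ) + 1)) atTop (𝓝[>] 0) := by
      rw [tendsto_nhdsWithin_iff]
      exact ⟨tendsto_one_div_add_atTop_nhds_zero_nat, Eventually.of_forall fun n => by
        simp only [mem_Ioi]; positivity⟩
    have h1 := hlim.comp hr
    have h2 := (tendsto_inv_iff.2 h1)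
    rw [ENNReal.inv_zero] at h2
    have h3 : Tendsto (fun n : ℕ => ((n : ℝ≥0∞) + 1) *
      ν (Metric.closedBall t (1 / ((n : ℝ) + 1)))) atTop (𝓝 ⊤) := by
      refine tendsto_nhds_top_mono h2 (Eventually.of_forall fun n => ?_)
      have hn : (0:ℝ) < (n : ℝ) + 1 := by positivity
      have e : ENNReal.ofReal ((n : ℝ) + 1) = (n : ℝ≥0∞) + 1 := by
        rw [ENNReal.ofReal_add (by positivity) zero_le_one]; simp
      have hv : volume (Metric.closedBall t (1 / ((n : ℝ) + 1))) ≠ 0 := by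
        rw [Real.volume_closedBall]; simp; positivity
      simp only [Function.comp]
      rw [ENNReal.inv_div (Or.inl (measure_ne_top _ _)) (Or.inr hv), div_eq_mul_inv, mul_comm]
      gcongr
      rw [← e, Real.volume_closedBall, ← ENNReal.ofReal_inv_of_pos (by positivity)]
      apply ENNReal.ofReal_le_ofReal
      rw [mul_one_div, inv_div]
      linarith
    rw [h3.liminf_eq] at ht
    exact lt_irrefl _ ht
  have := withDensity_absolutelyContinuous' (μ := ν)
    (Measure.measurable_rnDeriv (volume : Measure ℝ) ν).aemeasurable hD
  exact this.trans (Measure.absolutelyContinuous_of_le (Measure.withDensity_rnDeriv_le _ _))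

lemma energy {X : Type*} [MetricSpace X] [MeasurableSpace X] [BorelSpace X]
    (μ : Measure X) [IsFiniteMeasure μ] (d : ℝ) (hd : 1 < d) (x : X) (C r₀ : ℝ) (_hC : 0 ≤ C)
    (hr₀ : 0 < r₀)
    (h : ∀ r, 0 < r → r < r₀ → μ (Metric.closedBall x r) ≤ ENNReal.ofReal (C * r ^ d)) :
    μ {x} = 0 ∧ ∫⁻ y, ENNReal.ofReal ((dist x y)⁻¹) ∂μ < ⊤ := by
  constructor
  · have hr : Tendsto (fun r : ℝ => ENNReal.ofReal (C * r ^ d)) (𝓝[>] 0) (𝓝 0) := by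
      have : Tendsto (fun r : ℝ => ENNReal.ofReal (C * r ^ d)) (𝓝 0)
          (𝓝 (ENNReal.ofReal (C * 0 ^ d))) := by
        apply ENNReal.tendsto_ofReal
        apply Tendsto.const_mul
        exact (Real.continuousAt_rpow_const _ _ (Or.inr (by linarith))).tendsto
      rw [Real.zero_rpow (by linarith), mul_zero, ENNReal.ofReal_zero] at this
      exact this.mono_left nhdsWithin_le_nhds
    refine le_antisymm (ge_of_tendsto hr ?_) zero_le
    filter_upwards [Ioo_mem_nhdsGT hr₀] with r hr
    refine (measure_mono ?_).trans (h r hr.1 hr.2)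
    simp [hr.1.le]
  · rw [lintegral_eq_lintegral_meas_le μ (Eventually.of_forall fun y => by positivity)
      (by fun_prop)]
    set T := r₀⁻¹ + 1
    have hT : 0 < T := by positivity
    have hu : Ioi (0:ℝ) = Ioc 0 T ∪ Ioi T := (Ioc_union_Ioi_eq_Ioi hT.le).symm
    rw [hu]
    refine (lintegral_union_le _ _ _).trans_lt (ENNReal.add_lt_top.2 ⟨?_, ?_⟩)
    · calc _ ≤ ∫⁻ t in Ioc 0 T, μ univ := lintegral_mono fun t => measure_mono (subset_univ _)
        _ < ⊤ := by
          rw [setLIntegral_const]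
          exact ENNReal.mul_lt_top (measure_lt_top _ _) (by simp)
    · have hint : IntegrableOn (fun t : ℝ => C * t ^ (-d)) (Ioi T) :=
        (integrableOn_Ioi_rpow_of_lt (by linarith) hT).const_mul C
      refine lt_of_le_of_lt ?_ hint.lintegral_lt_top
      refine setLIntegral_mono' measurableSet_Ioi fun t ht => ?_
      have ht' : T < t := ht
      have ht0 : 0 < t := hT.trans ht
      rw [Real.rpow_neg ht0.le, ← Real.inv_rpow ht0.le]
      refine (measure_mono ?_).trans (h t⁻¹ (by positivity) ?_)
      · intro y hy
        simp only [mem_ofPred_eq] at hy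
        rw [Metric.mem_closedBall, dist_comm]
        have := inv_anti₀ ht0 hy
        rwa [inv_inv] at this
      · rw [inv_lt_comm₀ ht0 hr₀]
        simp only [T] at ht'; linarith

lemma density {X : Type*} [MetricSpace X] [SecondCountableTopology X] [MeasurableSpace X]
    [BorelSpace X] (μ : Measure X) [IsFiniteMeasure μ] (d : ℝ) (hd : 0 < d) :
    μH[d] {x | ¬ ∃ C r₀ : ℝ, 0 ≤ C ∧ 0 < r₀ ∧ ∀ r, 0 < r → r < r₀ →
      μ (Metric.closedBall x r) ≤ ENNReal.ofReal (C * r ^ d)} = 0 := by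
  set A := {x | ¬ ∃ C r₀ : ℝ, 0 ≤ C ∧ 0 < r₀ ∧ ∀ r, 0 < r → r < r₀ →
      μ (Metric.closedBall x r) ≤ ENNReal.ofReal (C * r ^ d)} with hA
  have key : ∀ C : ℝ, 0 < C → μH[d] A ≤ ENNReal.ofReal (8 ^ d / C) * μ univ := by
    intro C hC
    have h1 : ∀ n : ℕ, ∃ u : Set X, ∃ r : X → ℝ, u.Countable ∧
        (∀ x ∈ u, 0 < r x ∧ r x < 1 / ((n : ℝ) + 1) ∧
          ENNReal.ofReal (C * r x ^ d) < μ (Metric.closedBall x (r x))) ∧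
        (u.PairwiseDisjoint fun x => Metric.closedBall x (r x)) ∧
        A ⊆ ⋃ x : u, Metric.closedBall (x : X) (4 * r x) := by
      intro n
      have h2 : ∀ x ∈ A, ∃ r, 0 < r ∧ r < 1 / ((n : ℝ) + 1) ∧
          ENNReal.ofReal (C * r ^ d) < μ (Metric.closedBall x r) := by
        intro x hx
        by_contra hcon
        push Not at hcon
        exact hx ⟨C, 1 / ((n : ℝ) + 1), hC.le, by positivity, hcon⟩
      choose! r hr using h2
      obtain ⟨u, huA, hdisj, hcov⟩ :=
        Vitali.exists_disjoint_subfamily_covering_enlargement_closedBall A id r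
          (1 / ((n : ℝ) + 1)) (fun x hx => (hr x hx).2.1.le) 4 (by norm_num)
      refine ⟨u, r, ?_, fun x hx => hr x (huA hx), hdisj, ?_⟩
      · refine hdisj.countable_of_nonempty_interior fun x hx => ?_
        exact (Metric.nonempty_ball.2 (hr x (huA hx)).1).mono Metric.ball_subset_interior_closedBall
      · intro x hx
        obtain ⟨b, hb, hsub⟩ := hcov x hx
        exact mem_iUnion.2 ⟨⟨b, hb⟩, hsub (Metric.mem_closedBall_self (hr x hx).1.le)⟩
    choose u r hc hu hdisj hcov using h1
    have : ∀ n, Countable (u n) := fun n => (hc n).to_subtype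
    have hdiam : ∀ n (i : u n), Metric.ediam (Metric.closedBall (i : X) (4 * r n i))
        ≤ ENNReal.ofReal (8 * r n i) := by
      intro n i
      refine (Metric.ediam_le fun x hx y hy => ?_)
      rw [edist_dist]
      apply ENNReal.ofReal_le_ofReal
      have := dist_triangle_right x y (i : X)
      rw [Metric.mem_closedBall] at hx hy
      linarith
    have hlim : Tendsto (fun n : ℕ => ENNReal.ofReal (8 * (1 / ((n : ℝ) + 1)))) atTop (𝓝 0) := by
      have := ENNReal.tendsto_ofReal
        ((tendsto_one_div_add_atTop_nhds_zero_nat (𝕜 := ℝ)).const_mul 8)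
      simpa using this
    refine (Measure.hausdorffMeasure_le_liminf_tsum d A _ hlim
      (fun n (i : u n) => Metric.closedBall (i : X) (4 * r n i)) ?_
      (Eventually.of_forall hcov)).trans ?_
    · refine Eventually.of_forall fun n i => (hdiam n i).trans ?_
      apply ENNReal.ofReal_le_ofReal
      have := (hu n i i.2).2.1
      linarith
    · refine liminf_le_of_le (by isBoundedDefault) fun b hb => ?_
      obtain ⟨n, hn⟩ := hb.exists
      refine hn.trans ?_
      calc ∑' i : u n, Metric.ediam (Metric.closedBall (i : X) (4 * r n i)) ^ d
          ≤ ∑' i : u n, ENNReal.ofReal (8 ^ d / C) *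
              μ (Metric.closedBall (i : X) (r n i)) := by
            refine ENNReal.tsum_le_tsum fun i => ?_
            obtain ⟨hp, -, hm⟩ := hu n i i.2
            calc _ ≤ ENNReal.ofReal (8 * r n i) ^ d :=
                  ENNReal.rpow_le_rpow (hdiam n i) hd.le
              _ = ENNReal.ofReal (8 ^ d / C) * ENNReal.ofReal (C * r n i ^ d) := by
                  rw [ENNReal.ofReal_rpow_of_nonneg (by positivity) hd.le,
                    ← ENNReal.ofReal_mul (by positivity), Real.mul_rpow (by norm_num) hp.le]
                  congr 1
                  field_simp
              _ ≤ _ := by gcongr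
        _ = ENNReal.ofReal (8 ^ d / C) * ∑' i : u n, μ (Metric.closedBall (i : X) (r n i)) :=
            ENNReal.tsum_mul_left
        _ ≤ _ := by
            gcongr
            rw [← measure_iUnion]
            · exact measure_mono (subset_univ _)
            · intro i j hij
              exact hdisj n i.2 j.2 (fun h => hij (Subtype.ext h))
            · exact fun i => Metric.isClosed_closedBall.measurableSet
  refine le_antisymm ?_ zero_le
  have hl : Tendsto (fun n : ℕ => ENNReal.ofReal (8 ^ d / ((n : ℝ) + 1)) * μ univ) atTop
      (𝓝 (0 * μ univ)) := by
    refine ENNReal.Tendsto.mul_const ?_ (Or.inr (measure_ne_top _ _))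
    have := ENNReal.tendsto_ofReal
        ((tendsto_one_div_add_atTop_nhds_zero_nat (𝕜 := ℝ)).const_mul (8 ^ d))
    simpa [div_eq_mul_inv] using this
  rw [zero_mul] at hl
  exact ge_of_tendsto hl (Eventually.of_forall fun n => key _ (by positivity))

lemma proj_aux (μ : Measure (EuclideanSpace ℝ (Fin 2))) [IsFiniteMeasure μ]
    (h : ∀ᵐ x ∂μ, μ {x} = 0 ∧ ∫⁻ y, ENNReal.ofReal ((dist x y)⁻¹) ∂μ < ⊤) (s : ℝ) :
    ∀ᵐ θ ∂(volume.restrict (Icc s (s + 1)) : Measure ℝ),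
      Measure.map (fun x : EuclideanSpace ℝ (Fin 2) =>
          x 0 * Real.cos θ + x 1 * Real.sin θ) μ ≪ (volume : Measure ℝ) := by
  let S : ℕ → Set ((EuclideanSpace ℝ (Fin 2) × ℝ) × EuclideanSpace ℝ (Fin 2)) := fun n =>
    {z | |(z.1.1 0 - z.2 0) * Real.cos z.1.2 + (z.1.1 1 - z.2 1) * Real.sin z.1.2|
      ≤ 1 / ((n : ℝ) + 1)}
  have hS : ∀ n, MeasurableSet (S n) := fun n =>
    (isClosed_le (by fun_prop) (by fun_prop)).measurableSet
  let f : ℕ → EuclideanSpace ℝ (Fin 2) × ℝ → ℝ≥0∞ := fun n z => ((n : ℝ≥0∞) + 1) * μ (Prod.mk z ⁻¹' S n)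
  have hf : ∀ n, Measurable (f n) := fun n =>
    (measurable_measure_prodMk_left (hS n)).const_mul _
  have hF : Measurable (fun z => liminf (fun n => f n z) atTop) := Measurable.liminf hf
  have h1 : ∀ᵐ x ∂μ, ∀ᵐ θ ∂(volume.restrict (Icc s (s + 1)) : Measure ℝ),
      liminf (fun n => f n (x, θ)) atTop < ⊤ := by
    filter_upwards [h] with x hx
    refine ae_lt_top (hF.comp measurable_prodMk_left) ?_
    refine ne_top_of_le_ne_top (b := ENNReal.ofReal (2 * Real.pi) *
      ∫⁻ y, ENNReal.ofReal ((dist x y)⁻¹) ∂μ) (ENNReal.mul_ne_top ENNReal.ofReal_ne_top hx.2.ne) ?_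
    refine (lintegral_liminf_le fun n => (hf n).comp measurable_prodMk_left).trans ?_
    refine liminf_le_of_le (by isBoundedDefault) fun b hb => ?_
    obtain ⟨n, hn⟩ := hb.exists
    refine hn.trans ?_
    have hSx : MeasurableSet {p : ℝ × EuclideanSpace ℝ (Fin 2) | ((x, p.1), p.2) ∈ S n} :=
      (hS n).preimage (by fun_prop)
    have e : ENNReal.ofReal ((n : ℝ) + 1) = (n : ℝ≥0∞) + 1 := by
      rw [ENNReal.ofReal_add (by positivity) zero_le_one]; simp
    have hne : ∀ᵐ y ∂μ, y ≠ x := by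
      rw [ae_iff]; simpa using hx.1
    calc ∫⁻ θ in Icc s (s + 1), f n (x, θ)
        = ((n : ℝ≥0∞) + 1) * ((volume.restrict (Icc s (s + 1))).prod μ)
            {p : ℝ × EuclideanSpace ℝ (Fin 2) | ((x, p.1), p.2) ∈ S n} := by
          rw [Measure.prod_apply hSx, ← lintegral_const_mul _ (measurable_measure_prodMk_left hSx)]
          rfl
      _ = ((n : ℝ≥0∞) + 1) * ∫⁻ y, (volume.restrict (Icc s (s + 1)))
            ((fun θ => (θ, y)) ⁻¹' {p : ℝ × EuclideanSpace ℝ (Fin 2) | ((x, p.1), p.2) ∈ S n}) ∂μ := by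
          rw [Measure.prod_apply_symm hSx]
      _ ≤ ((n : ℝ≥0∞) + 1) * ∫⁻ y, ENNReal.ofReal (2 * Real.pi * (1 / ((n : ℝ) + 1)))
            * ENNReal.ofReal ((dist x y)⁻¹) ∂μ := by
          refine mul_le_mul_right (lintegral_mono_ae ?_) _
          filter_upwards [hne] with y hy
          rw [Measure.restrict_apply (measurable_prodMk_right hSx), inter_comm,
            ← ENNReal.ofReal_mul (by positivity), EuclideanSpace.dist_eq, Fin.sum_univ_two,
            Real.dist_eq, Real.dist_eq, sq_abs, sq_abs]
          refine geom_bound (x 0 - y 0) (x 1 - y 1) _ s ?_ (by positivity)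
          intro h0
          simp only [Prod.mk.injEq, sub_eq_zero] at h0
          apply hy
          ext i
          fin_cases i
          · exact h0.1.symm
          · exact h0.2.symm
      _ = _ := by
          rw [lintegral_const_mul' _ _ ENNReal.ofReal_ne_top, ← mul_assoc, ← e,
            ← ENNReal.ofReal_mul (by positivity)]
          congr 2
          field_simp
  rw [Measure.ae_ae_comm (p := fun x θ => liminf (fun n => f n (x, θ)) atTop < ⊤)
    (measurableSet_lt hF measurable_const)] at h1
  filter_upwards [h1] with θ hθ
  have hm : Measurable (fun x : EuclideanSpace ℝ (Fin 2) =>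
          x 0 * Real.cos θ + x 1 * Real.sin θ) := by fun_prop
  apply ac_crit
  refine (ae_map_iff hm.aemeasurable ?_).2 ?_
  · refine measurableSet_lt (Measurable.liminf fun n => ?_) measurable_const
    refine Measurable.const_mul ?_ _
    exact measurable_measure_prodMk_left (ν := μ.map _)
      (s := {p : ℝ × ℝ | dist p.2 p.1 ≤ 1 / ((n : ℝ) + 1)})
      (isClosed_le (by fun_prop) (by fun_prop)).measurableSet
  · filter_upwards [hθ] with x hx
    have hx' : liminf (fun n => f n (x, θ)) atTop < ⊤ := hx
    refine lt_of_eq_of_lt ?_ hx'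
    refine congrArg (fun g => liminf g atTop) (funext fun n => ?_)
    simp only [f]
    rw [Measure.map_apply hm Metric.isClosed_closedBall.measurableSet]
    congr 2
    ext y
    simp only [mem_preimage, Metric.mem_closedBall, Real.dist_eq, S, mem_ofPred_eq]
    rw [abs_sub_comm]
    ring_nf

/-- Let K ⊂ ℝ² be a Borel set with Hausdorff dimension d > 1 and
m_d(K) < ∞. For θ ∈ ℝ let μ_θ = (proj_θ)_*(m_d ↾ K) be the pushforward onto the line
L_θ of the restriction of the d-dimensional Hausdorff measure m_d to K. Then for
Lebesgue-almost every θ, μ_θ is absolutely continuous with respect to the 1-dimensional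
Lebesgue measure on L_θ. The line L_θ is identified isometrically with ℝ via
t ↦ t • (cos θ, sin θ), so proj_θ becomes x ↦ x₀ cos θ + x₁ sin θ and the arclength
(Lebesgue) measure on L_θ becomes Lebesgue measure on ℝ. -/
theorem stmt_6 (K : Set (EuclideanSpace ℝ (Fin 2))) (hK : MeasurableSet K)
    (d : ℝ) (hd : 1 < d) (hdim : dimH K = ENNReal.ofReal d)
    (hfin : μH[d] K < ⊤) :
    ∀ᵐ θ ∂(volume : Measure ℝ),
      Measure.map (fun x : EuclideanSpace ℝ (Fin 2) =>
          x 0 * Real.cos θ + x 1 * Real.sin θ) (μH[d].restrict K)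
        ≪ (volume : Measure ℝ) := by
  have : IsFiniteMeasure (μH[d].restrict K : Measure (EuclideanSpace ℝ (Fin 2))) :=
    ⟨by rwa [Measure.restrict_apply_univ]⟩
  have h : ∀ᵐ x ∂(μH[d].restrict K : Measure (EuclideanSpace ℝ (Fin 2))),
      (μH[d].restrict K : Measure (EuclideanSpace ℝ (Fin 2))) {x} = 0 ∧
      ∫⁻ y, ENNReal.ofReal ((dist x y)⁻¹) ∂(μH[d].restrict K) < ⊤ := by
    have h0 := Measure.absolutelyContinuous_of_le (Measure.restrict_le_self (s := K))
      (density (μH[d].restrict K : Measure (EuclideanSpace ℝ (Fin 2))) d (by linarith))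
    have h1 := ae_iff.2 h0
    filter_upwards [h1] with x hx
    obtain ⟨C, r₀, hC, hr, hx⟩ := hx
    exact energy _ d hd x C r₀ hC hr hx
  have h2 : ∀ n : ℤ, _ := fun n => (ae_restrict_iff' measurableSet_Icc).1 (proj_aux _ h (n : ℝ))
  filter_upwards [ae_all_iff.2 h2] with θ hθ
  exact hθ ⌊θ⌋ ⟨Int.floor_le θ, (Int.lt_floor_add_one θ).le⟩
end

section
/- Let K ⊂ ℝ² be a Borel set with Hausdorff dimension d > 1 and 0 < m_d(K) < ∞, and suppose there exists b > 0 such that m_d(K ∩ B(x,r)) ≤ b r^d for all x ∈ K and all r > 0, where B(x,r) is the open ball of center x and radius r. For θ ∈ ℝ let μ_θ = (proj_θ)_*(m_d ↾ K). Then for Lebesgue-almost every θ, μ_θ is absolutely continuous with respect to the one-dimensional Lebesgue measure m on L_θ and its Radon–Nikodym derivative dμ_θ/dm belongs to L²(m). -/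
open MeasureTheory

open Filter Topology Set in
lemma aux_A (ν : Measure ℝ) [IsFiniteMeasure ν] (r : ℝ) (hr : 0 < r) :
    ∫⁻ t, (ν (Metric.closedBall t r) / ENNReal.ofReal (2 * r)) ^ 2 ≤
      (ν.prod ν) {p | dist p.1 p.2 ≤ 2 * r} / ENNReal.ofReal (2 * r) := by
  have hc0 : ENNReal.ofReal (2 * r) ≠ 0 := by simp; linarith
  have hct : ENNReal.ofReal (2 * r) ≠ ⊤ := ENNReal.ofReal_ne_top
  set c := ENNReal.ofReal (2 * r) with hc
  let S : Set (ℝ × (ℝ × ℝ)) := {q | dist q.2.1 q.1 ≤ r ∧ dist q.2.2 q.1 ≤ r}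
  have hS : MeasurableSet S := by
    have m1 : MeasurableSet {q : ℝ × (ℝ × ℝ) | dist q.2.1 q.1 ≤ r} :=
      measurableSet_le (by fun_prop) (by fun_prop)
    have m2 : MeasurableSet {q : ℝ × (ℝ × ℝ) | dist q.2.2 q.1 ≤ r} :=
      measurableSet_le (by fun_prop) (by fun_prop)
    exact m1.inter m2
  have h1 : ∀ t, ν (Metric.closedBall t r) ^ 2 = (ν.prod ν) (Prod.mk t ⁻¹' S) := by
    intro t
    rw [sq, ← Measure.prod_prod]
    congr 1
  have hD : MeasurableSet {p : ℝ × ℝ | dist p.1 p.2 ≤ 2 * r} :=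
    measurableSet_le (by fun_prop) (by fun_prop)
  have h2 : ∫⁻ t, ν (Metric.closedBall t r) ^ 2 ≤ c * (ν.prod ν) {p | dist p.1 p.2 ≤ 2 * r} := by
    simp_rw [h1]
    rw [← Measure.prod_apply hS, Measure.prod_apply_symm hS, ← lintegral_indicator_const hD]
    apply lintegral_mono
    rintro ⟨x, y⟩
    by_cases hxy : dist x y ≤ 2 * r
    · rw [indicator_of_mem (by simpa using hxy), hc, ← Real.volume_closedBall x r]
      apply measure_mono
      intro t ht
      have : dist x t ≤ r := ht.1
      rw [Metric.mem_closedBall, dist_comm]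
      exact this
    · have : (fun t => (t, (x, y))) ⁻¹' S = ∅ := by
        ext t
        simp only [mem_preimage, mem_empty_iff_false, iff_false]
        rintro ⟨a, b⟩
        have := dist_triangle_right x y t
        dsimp at a b
        linarith
      change volume ((fun t => (t, (x, y))) ⁻¹' S) ≤ _
      rw [this]
      simp
  calc ∫⁻ t, (ν (Metric.closedBall t r) / c) ^ 2
      = ∫⁻ t, ν (Metric.closedBall t r) ^ 2 * (c⁻¹ ^ 2) := by
        simp_rw [div_eq_mul_inv, mul_pow]
    _ = (∫⁻ t, ν (Metric.closedBall t r) ^ 2) * (c⁻¹ ^ 2) := by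
        rw [lintegral_mul_const']
        exact ENNReal.pow_ne_top (ENNReal.inv_ne_top.2 hc0)
    _ ≤ (c * (ν.prod ν) {p | dist p.1 p.2 ≤ 2 * r}) * (c⁻¹ ^ 2) := by gcongr
    _ = (c * c⁻¹) * ((ν.prod ν) {p | dist p.1 p.2 ≤ 2 * r} * c⁻¹) := by ring
    _ = _ := by rw [ENNReal.mul_inv_cancel hc0 hct, one_mul, div_eq_mul_inv]

lemma aux_meas (ν : Measure ℝ) [IsFiniteMeasure ν] (r : ℝ) :
    Measurable (fun t => ν (Metric.closedBall t r)) := by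
  have hS : MeasurableSet {q : ℝ × ℝ | dist q.2 q.1 ≤ r} :=
    measurableSet_le (by fun_prop) (by fun_prop)
  exact measurable_measure_prodMk_left hS

open Filter Topology Set in
lemma aux_B (ν : Measure ℝ) [IsFiniteMeasure ν] (r : ℝ) (U : Set ℝ) (hU : MeasurableSet U) :
    ∫⁻ t in U, ν (Metric.closedBall t r) =
      ∫⁻ s, volume (Metric.closedBall s r ∩ U) ∂ν := by
  let S : Set (ℝ × ℝ) := {q : ℝ × ℝ | dist q.2 q.1 ≤ r}
  have hS : MeasurableSet S :=
    measurableSet_le (by fun_prop) (by fun_prop)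
  have h1 : ∫⁻ t in U, ν (Metric.closedBall t r) = ((volume.restrict U).prod ν) S := by
    rw [Measure.prod_apply hS]; rfl
  rw [h1, Measure.prod_apply_symm hS]
  congr 1
  ext s
  rw [← Measure.restrict_apply' hU]
  congr 1
  ext t
  simp [S, dist_comm]

open Filter Topology Set in
lemma aux_1d (ν : Measure ℝ) [IsFiniteMeasure ν] (r : ℕ → ℝ) (hr : ∀ n, 0 < r n)
    (hr0 : Tendsto r atTop (𝓝 0))
    (h : liminf (fun n => (ν.prod ν) {p | dist p.1 p.2 ≤ 2 * r n} / ENNReal.ofReal (2 * r n)) atTop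
      < ⊤) :
    ν ≪ volume ∧ ∫⁻ t, (ν.rnDeriv volume t) ^ 2 < ⊤ := by
  have hr0' : Tendsto r atTop (𝓝[>] 0) :=
    tendsto_nhdsWithin_iff.2 ⟨hr0, Eventually.of_forall hr⟩
  obtain ⟨M, hM, hMt⟩ := exists_between h
  have hfr := frequently_lt_of_liminf_lt (by isBoundedDefault) hM
  have hfr2 : ∃ᶠ n in atTop,
      ∫⁻ t, (ν (Metric.closedBall t (r n)) / ENNReal.ofReal (2 * r n)) ^ 2 ≤ M :=
    hfr.mono fun n hn => (aux_A ν (r n) (hr n)).trans hn.le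
  constructor
  · -- open set estimate
    have key : ∀ (U : Set ℝ), IsOpen U → ∀ c : ENNReal, c ≠ 0 → c ≠ ⊤ →
        ν U ≤ c * volume U + c⁻¹ * M := by
      intro U hU c hc0 hct
      have e1 : ν U ≤ ∫⁻ s, liminf (fun n =>
          volume (Metric.closedBall s (r n) ∩ U) / ENNReal.ofReal (2 * r n)) atTop ∂ν := by
        rw [← lintegral_indicator_one hU.measurableSet]
        apply lintegral_mono
        intro s
        by_cases hs : s ∈ U
        · rw [indicator_of_mem hs]
          apply le_liminf_of_le (by isBoundedDefault)
          obtain ⟨ε, hε, hεU⟩ := Metric.isOpen_iff.1 hU s hs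
          filter_upwards [hr0.eventually (gt_mem_nhds hε)] with n hn
          rw [inter_eq_self_of_subset_left
            ((Metric.closedBall_subset_ball hn).trans hεU), Real.volume_closedBall,
            ENNReal.div_self]
          · simp
          · simpa using hr n
          · exact ENNReal.ofReal_ne_top
        · rw [indicator_of_notMem hs]; exact zero_le
      have e2 := lintegral_liminf_le (μ := ν) (u := atTop) (f := fun n s =>
          volume (Metric.closedBall s (r n) ∩ U) / ENNReal.ofReal (2 * r n)) (by
        intro n
        apply Measurable.div_const
        have hS : MeasurableSet {q : ℝ × ℝ | dist q.2 q.1 ≤ r n} :=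
          measurableSet_le (by fun_prop) (by fun_prop)
        have := measurable_measure_prodMk_left (ν := (volume : Measure ℝ).restrict U) hS
        have e : (fun s => volume (Metric.closedBall s (r n) ∩ U)) =
            fun s => (volume.restrict U) (Prod.mk s ⁻¹' {q : ℝ × ℝ | dist q.2 q.1 ≤ r n}) := by
          ext s
          rw [Measure.restrict_apply' hU.measurableSet]
          rfl
        rw [e]
        exact this)
      refine e1.trans (e2.trans ?_)
      apply liminf_le_of_frequently_le _ (by isBoundedDefault)
      refine hfr2.mono fun n hn => ?_
      have hcc0 : ENNReal.ofReal (2 * r n) ≠ 0 := by simpa using hr n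
      have e3 : ∫⁻ s, volume (Metric.closedBall s (r n) ∩ U) / ENNReal.ofReal (2 * r n) ∂ν
          = ∫⁻ t in U, ν (Metric.closedBall t (r n)) / ENNReal.ofReal (2 * r n) := by
        simp_rw [div_eq_mul_inv]
        rw [lintegral_mul_const' _ _ (ENNReal.inv_ne_top.2 hcc0),
          lintegral_mul_const' _ _ (ENNReal.inv_ne_top.2 hcc0), aux_B _ _ _ hU.measurableSet]
      rw [e3]
      calc ∫⁻ t in U, ν (Metric.closedBall t (r n)) / ENNReal.ofReal (2 * r n)
          ≤ ∫⁻ t in U, (c + c⁻¹ * (ν (Metric.closedBall t (r n)) / ENNReal.ofReal (2 * r n)) ^ 2) := by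
            apply lintegral_mono
            intro t
            dsimp only
            generalize ν (Metric.closedBall t (r n)) / ENNReal.ofReal (2 * r n) = f
            rcases le_total f c with hf | hf
            · exact hf.trans le_self_add
            · refine le_trans ?_ le_add_self
              calc f = c⁻¹ * (c * f) := by
                    rw [← mul_assoc, ENNReal.inv_mul_cancel hc0 hct, one_mul]
                _ ≤ _ := by rw [sq]; gcongr
        _ = c * volume U + c⁻¹ * ∫⁻ t in U,
              (ν (Metric.closedBall t (r n)) / ENNReal.ofReal (2 * r n)) ^ 2 := by
            rw [lintegral_add_left measurable_const,
              lintegral_const_mul' _ _ (ENNReal.inv_ne_top.2 hc0)]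
            simp
        _ ≤ c * volume U + c⁻¹ * M := by
            gcongr
            exact (setLIntegral_le_lintegral _ _).trans hn
    intro s hs
    have k2 : ∀ n : ℕ, ν s ≤ (n + 1 : ENNReal)⁻¹ * (1 + M) := by
      intro n
      have hc0 : (n + 1 : ENNReal) ≠ 0 := by simp
      have hct : (n + 1 : ENNReal) ≠ ⊤ := by simp
      obtain ⟨U, hsU, hU, hUv⟩ := s.exists_isOpen_lt_of_lt (μ := volume)
        (((n + 1 : ENNReal)⁻¹) ^ 2) (by
          rw [hs]; exact ENNReal.pow_pos (ENNReal.inv_pos.2 hct) 2)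
      refine (measure_mono hsU).trans ((key U hU (n + 1) hc0 hct).trans ?_)
      rw [mul_add, mul_one]
      gcongr
      calc (n + 1 : ENNReal) * volume U ≤ (n + 1 : ENNReal) * (((n + 1 : ENNReal)⁻¹) ^ 2) := by
            gcongr
        _ = _ := by rw [sq, ← mul_assoc, ENNReal.mul_inv_cancel hc0 hct, one_mul]
    have lim : Tendsto (fun n : ℕ => (n + 1 : ENNReal)⁻¹ * (1 + M)) atTop (𝓝 (0 * (1 + M))) := by
      apply ENNReal.Tendsto.mul_const
      · have := (tendsto_add_atTop_iff_nat 1).2 ENNReal.tendsto_inv_nat_nhds_zero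
        simpa using this
      · right; simp [hMt.ne]
    rw [zero_mul] at lim
    exact le_antisymm (ge_of_tendsto' lim k2) zero_le
  · refine lt_of_le_of_lt ?_ hMt
    have hae := Besicovitch.ae_tendsto_rnDeriv ν (volume : Measure ℝ)
    have e1 : ∫⁻ t, (ν.rnDeriv volume t) ^ 2 = ∫⁻ t, liminf (fun n =>
        (ν (Metric.closedBall t (r n)) / ENNReal.ofReal (2 * r n)) ^ 2) atTop := by
      apply lintegral_congr_ae
      filter_upwards [hae] with t ht
      have h3 := ht.comp hr0'
      have h4 := (ENNReal.continuous_pow 2).continuousAt.tendsto.comp h3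
      rw [← h4.liminf_eq]
      simp [Function.comp_def, Real.volume_closedBall]
    rw [e1]
    refine (lintegral_liminf_le ?_).trans (liminf_le_of_frequently_le hfr2 (by isBoundedDefault))
    intro n
    exact ((aux_meas ν (r n)).div_const _).pow_const 2

lemma aux_trans (x y : EuclideanSpace ℝ (Fin 2)) (r : ℝ) (hr : 0 < r) (I : Set ℝ)
    (hI : ∀ s ∈ I, ∀ t ∈ I, |s - t| ≤ 1) :
    volume ({θ | dist (x 0 * Real.cos θ + x 1 * Real.sin θ)
      (y 0 * Real.cos θ + y 1 * Real.sin θ) ≤ r} ∩ I) ≤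
      ENNReal.ofReal (Real.pi * r) * (edist x y)⁻¹ := by
  rcases eq_or_ne x y with rfl | hxy
  · rw [edist_self, ENNReal.inv_zero, ENNReal.mul_top]
    · exact le_top
    · simp; positivity
  have hd : 0 < dist x y := dist_pos.2 hxy
  refine (Real.volume_le_diam _).trans (Metric.ediam_le ?_)
  rintro s ⟨hs, hsI⟩ t ⟨ht, htI⟩
  rw [edist_dist x y, ← ENNReal.ofReal_inv_of_pos hd, ← ENNReal.ofReal_mul (by positivity),
    edist_dist]
  apply ENNReal.ofReal_le_ofReal
  have h1 := hI s hsI t htI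
  have h2 : 2 / Real.pi * |s - t| ≤ |Real.sin (s - t)| :=
    Real.mul_abs_le_abs_sin (by linarith [Real.pi_gt_three])
  simp only [Set.mem_ofPred_eq, Real.dist_eq] at hs ht
  have hD : dist x y ^ 2 = (x 0 - y 0) ^ 2 + (x 1 - y 1) ^ 2 := by
    rw [EuclideanSpace.dist_eq, Real.sq_sqrt (by positivity)]
    simp [Real.dist_eq]
  set a := x 0 - y 0
  set b := x 1 - y 1
  have hu : |a * Real.cos s + b * Real.sin s| ≤ r := by
    convert hs using 2; simp only [a, b]; ring
  have hv : |a * Real.cos t + b * Real.sin t| ≤ r := by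
    convert ht using 2; simp only [a, b]; ring
  set u := a * Real.cos s + b * Real.sin s with hu'
  set v := a * Real.cos t + b * Real.sin t with hv'
  have hA : a * Real.sin (s - t) = v * Real.sin s - u * Real.sin t := by
    rw [Real.sin_sub, hu', hv']; ring
  have hB : b * Real.sin (s - t) = u * Real.cos t - v * Real.cos s := by
    rw [Real.sin_sub, hu', hv']; ring
  have hkey : (dist x y * Real.sin (s - t)) ^ 2 ≤ (2 * r) ^ 2 := by
    have e : (dist x y * Real.sin (s - t)) ^ 2 = u ^ 2 + v ^ 2 - 2 * (u * v) * Real.cos (s - t) := by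
      rw [mul_pow, hD]
      calc (a ^ 2 + b ^ 2) * Real.sin (s - t) ^ 2
          = (a * Real.sin (s - t)) ^ 2 + (b * Real.sin (s - t)) ^ 2 := by ring
        _ = _ := by
          rw [hA, hB, Real.cos_sub]
          linear_combination v ^ 2 * Real.sin_sq_add_cos_sq s + u ^ 2 * Real.sin_sq_add_cos_sq t
    have f1 : |u * v| ≤ r * r := by rw [abs_mul]; gcongr
    have f2 : |u * v * Real.cos (s - t)| ≤ r * r := by
      rw [abs_mul]
      calc _ ≤ r * r * 1 := by
            gcongr; exact Real.abs_cos_le_one _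
        _ = _ := by ring
    have f3 : u ^ 2 ≤ r ^ 2 := sq_le_sq' (abs_le.1 hu).1 (abs_le.1 hu).2
    have f4 : v ^ 2 ≤ r ^ 2 := sq_le_sq' (abs_le.1 hv).1 (abs_le.1 hv).2
    rw [e]
    nlinarith [(abs_le.1 f2).1]
  have h3 : dist x y * |Real.sin (s - t)| ≤ 2 * r := by
    have := sq_le_sq.1 hkey
    rwa [abs_mul, abs_of_pos hd, abs_of_pos (by positivity : (0:ℝ) < 2 * r)] at this
  rw [Real.dist_eq, ← div_eq_mul_inv, le_div_iff₀ hd]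
  have h4 : dist x y * (2 / Real.pi * |s - t|) ≤ 2 * r :=
    (mul_le_mul_of_nonneg_left h2 hd.le).trans h3
  have hp := Real.pi_pos
  have h5 : dist x y * (2 / Real.pi * |s - t|) = 2 * (|s - t| * dist x y) / Real.pi := by
    field_simp
  rw [h5, div_le_iff₀ hp] at h4
  linarith

open Set in
lemma aux_energy (μ : Measure (EuclideanSpace ℝ (Fin 2))) [IsFiniteMeasure μ] (d b : ℝ) (hd : 1 < d)
    (hb : 0 < b) : ∃ C : ENNReal, C < ⊤ ∧ ∀ x, (∀ r : ℝ, 0 < r →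
      μ (Metric.ball x r) ≤ ENNReal.ofReal (b * r ^ d)) → ∫⁻ y, (edist x y)⁻¹ ∂μ ≤ C := by
  let g : ℕ → ℝ := fun n => 2 ^ (n + 1) * (b * (2 * (1 / 2 : ℝ) ^ n) ^ d)
  have hg : Summable g := by
    have e : g = fun n => (2 * b * 2 ^ d) * (2 * (1 / 2 : ℝ) ^ d) ^ n := by
      ext n
      simp only [g]
      rw [Real.mul_rpow (by norm_num) (by positivity), ← Real.rpow_natCast (1 / 2 : ℝ) n,
        ← Real.rpow_mul (by norm_num), mul_comm (n : ℝ) d, Real.rpow_mul (by norm_num),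
        Real.rpow_natCast, mul_pow, pow_succ]
      ring
    rw [e]
    apply Summable.mul_left
    apply summable_geometric_of_lt_one (by positivity)
    have : (1 / 2 : ℝ) ^ d < (1 / 2 : ℝ) ^ (1 : ℝ) :=
      Real.rpow_lt_rpow_of_exponent_gt (by norm_num) (by norm_num) hd
    rw [Real.rpow_one] at this
    linarith
  refine ⟨μ univ + ∑' n, ENNReal.ofReal (g n), ?_, ?_⟩
  · exact ENNReal.add_lt_top.2 ⟨measure_lt_top _ _, hg.tsum_ofReal_lt_top⟩
  intro x hx
  have hmb : ∀ n : ℕ, MeasurableSet (Metric.ball x (2 * (1 / 2 : ℝ) ^ n)) :=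
    fun n => measurableSet_ball
  have pt : ∀ y, (edist x y)⁻¹ ≤ 1 + ∑' n : ℕ,
      (Metric.ball x (2 * (1 / 2 : ℝ) ^ n)).indicator (fun _ => ENNReal.ofReal (2 ^ (n + 1))) y := by
    intro y
    rcases eq_or_ne x y with rfl | hxy
    · have : ∑' n : ℕ, (Metric.ball x (2 * (1 / 2 : ℝ) ^ n)).indicator
          (fun _ => ENNReal.ofReal (2 ^ (n + 1))) x = ⊤ := by
        rw [eq_top_iff, ← ENNReal.tsum_const_eq_top_of_ne_zero (α := ℕ) one_ne_zero]
        apply ENNReal.tsum_le_tsum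
        intro n
        rw [indicator_of_mem (Metric.mem_ball_self (by positivity))]
        rw [← ENNReal.ofReal_one]
        exact ENNReal.ofReal_le_ofReal (one_le_pow₀ (by norm_num))
      rw [this]; simp
    have hd0 : 0 < dist x y := dist_pos.2 hxy
    rw [edist_dist, ← ENNReal.ofReal_inv_of_pos hd0]
    rcases le_total (dist x y) 1 with h1 | h1
    · obtain ⟨n, hn1, hn2⟩ := exists_nat_pow_near_of_lt_one hd0 h1
        (by norm_num : (0 : ℝ) < 1 / 2) (by norm_num)
      refine le_trans ?_ le_add_self
      refine le_trans ?_ (ENNReal.le_tsum n)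
      rw [indicator_of_mem]
      · apply ENNReal.ofReal_le_ofReal
        rw [inv_le_comm₀ hd0 (by positivity)]
        rw [one_div, inv_pow] at hn1
        exact hn1.le
      · rw [Metric.mem_ball, dist_comm]
        have : (0 : ℝ) < (1 / 2) ^ n := by positivity
        linarith
    · refine le_trans ?_ le_self_add
      rw [← ENNReal.ofReal_one]
      exact ENNReal.ofReal_le_ofReal (inv_le_one_of_one_le₀ h1)
  refine (lintegral_mono pt).trans ?_
  rw [lintegral_add_left measurable_const, lintegral_tsum
    (fun n => (measurable_const.indicator (hmb n)).aemeasurable)]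
  simp only [lintegral_const, one_mul]
  gcongr with n
  rw [lintegral_indicator_const (hmb n)]
  simp only [g]
  rw [ENNReal.ofReal_mul (by positivity)]
  gcongr
  exact hx _ (by positivity)

/-- Theorem 1.2 of [Lima-Moreira], corrected: Let K ⊂ ℝ² be a Borel set
with Hausdorff dimension d > 1 and 0 < m_d(K) < ∞, and suppose there is b > 0 with
m_d(K ∩ B(x,r)) ≤ b r^d for all x ∈ K and r > 0 (B(x,r) the open ball). For θ ∈ ℝ let
μ_θ = (proj_θ)_*(m_d ↾ K). Then for Lebesgue-almost every θ, μ_θ is absolutely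
continuous with respect to 1-dimensional Lebesgue measure m on L_θ, and its
Radon–Nikodym derivative dμ_θ/dm is in L²(m). The line L_θ is identified isometrically
with ℝ via t ↦ t • (cos θ, sin θ), so proj_θ becomes x ↦ x₀ cos θ + x₁ sin θ and the
arclength (Lebesgue) measure on L_θ becomes Lebesgue measure on ℝ. -/
theorem stmt_7 (K : Set (EuclideanSpace ℝ (Fin 2))) (hK : MeasurableSet K)
    (d : ℝ) (hd : 1 < d) (hdim : dimH K = ENNReal.ofReal d)
    (hpos : 0 < μH[d] K) (hfin : μH[d] K < ⊤)
    (b : ℝ) (hb : 0 < b)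
    (hreg : ∀ x ∈ K, ∀ r : ℝ, 0 < r →
      μH[d] (K ∩ Metric.ball x r) ≤ ENNReal.ofReal (b * r ^ d)) :
    ∀ᵐ θ ∂(volume : Measure ℝ),
      Measure.map (fun x : EuclideanSpace ℝ (Fin 2) =>
          x 0 * Real.cos θ + x 1 * Real.sin θ) (μH[d].restrict K)
        ≪ (volume : Measure ℝ) ∧
      ∫⁻ t, ((Measure.map (fun x : EuclideanSpace ℝ (Fin 2) =>
          x 0 * Real.cos θ + x 1 * Real.sin θ) (μH[d].restrict K)).rnDeriv
            (volume : Measure ℝ) t) ^ 2 ∂(volume : Measure ℝ) < ⊤ := by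
  have : IsFiniteMeasure (μH[d].restrict K) := ⟨by simpa using hfin⟩
  set μ : Measure (EuclideanSpace ℝ (Fin 2)) := μH[d].restrict K with hμ
  obtain ⟨C, hC, hCx⟩ := aux_energy μ d b hd hb
  have hE : ∫⁻ p, (edist p.1 p.2)⁻¹ ∂(μ.prod μ) < ⊤ := by
    rw [lintegral_prod _ (by fun_prop)]
    have : ∀ᵐ x ∂μ, ∫⁻ y, (edist x y)⁻¹ ∂μ ≤ C := by
      filter_upwards [ae_restrict_mem hK] with x hx
      apply hCx
      intro r hr
      rw [hμ, Measure.restrict_apply measurableSet_ball, Set.inter_comm]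
      exact hreg x hx r hr
    refine (lintegral_mono_ae this).trans_lt ?_
    rw [lintegral_const]
    exact ENNReal.mul_lt_top hC (measure_lt_top _ _)
  let r : ℕ → ℝ := fun n => 1 / ((n : ℝ) + 1)
  have hr : ∀ n, 0 < r n := fun n => by positivity
  have hr0 : Filter.Tendsto r Filter.atTop (nhds 0) := tendsto_one_div_add_atTop_nhds_zero_nat
  let P : ℝ → EuclideanSpace ℝ (Fin 2) → ℝ := fun θ x => x 0 * Real.cos θ + x 1 * Real.sin θ
  have hP : ∀ θ, Measurable (P θ) := fun θ => by fun_prop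
  let S : ℕ → Set (ℝ × (EuclideanSpace ℝ (Fin 2) × EuclideanSpace ℝ (Fin 2))) :=
    fun n => {q | dist (P q.1 q.2.1) (P q.1 q.2.2) ≤ 2 * r n}
  have hS : ∀ n, MeasurableSet (S n) := fun n =>
    measurableSet_le (by simp only [P]; fun_prop) (by fun_prop)
  let F : ℕ → ℝ → ENNReal := fun n θ =>
    (μ.prod μ) (Prod.mk θ ⁻¹' S n) / ENNReal.ofReal (2 * r n)
  have hF : ∀ n, Measurable (F n) := fun n => (measurable_measure_prodMk_left (hS n)).div_const _
  have main : ∀ k : ℤ, ∀ᵐ θ ∂(volume : Measure ℝ), θ ∈ Set.Icc (k : ℝ) (k + 1) →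
      Filter.liminf (fun n => F n θ) Filter.atTop < ⊤ := by
    intro k
    rw [← ae_restrict_iff' measurableSet_Icc]
    apply ae_lt_top (Measurable.liminf hF)
    refine ((lintegral_liminf_le hF).trans_lt ?_).ne
    have bd : ∀ n, ∫⁻ θ in Set.Icc (k : ℝ) (k + 1), F n θ ≤
        ENNReal.ofReal Real.pi * ∫⁻ p, (edist p.1 p.2)⁻¹ ∂(μ.prod μ) := by
      intro n
      have hr2 : 0 < 2 * r n := by linarith [hr n]
      have hc0 : ENNReal.ofReal (2 * r n) ≠ 0 := by simpa using hr n
      simp only [F, div_eq_mul_inv]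
      rw [lintegral_mul_const' _ _ (ENNReal.inv_ne_top.2 hc0), ← Measure.prod_apply (hS n),
        Measure.prod_apply_symm (hS n), ← lintegral_const_mul' _ _ ENNReal.ofReal_ne_top,
        ← lintegral_mul_const' _ _ (ENNReal.inv_ne_top.2 hc0)]
      apply lintegral_mono
      rintro ⟨x, y⟩
      dsimp only
      rw [Measure.restrict_apply' measurableSet_Icc]
      have := aux_trans x y (2 * r n) hr2 (Set.Icc (k : ℝ) (k + 1)) (by
        rintro s ⟨hs1, hs2⟩ t ⟨ht1, ht2⟩
        rw [abs_le]; constructor <;> linarith)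
      calc _ ≤ ENNReal.ofReal (Real.pi * (2 * r n)) * (edist x y)⁻¹ *
            (ENNReal.ofReal (2 * r n))⁻¹ := by gcongr; exact this
        _ = (ENNReal.ofReal (2 * r n) * (ENNReal.ofReal (2 * r n))⁻¹) *
            (ENNReal.ofReal Real.pi * (edist x y)⁻¹) := by
            rw [ENNReal.ofReal_mul Real.pi_pos.le]; ring
        _ = _ := by rw [ENNReal.mul_inv_cancel hc0 ENNReal.ofReal_ne_top, one_mul]
    refine lt_of_le_of_lt ?_ (ENNReal.mul_lt_top (ENNReal.ofReal_lt_top (r := Real.pi)) hE)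
    exact Filter.liminf_le_of_frequently_le (Filter.Frequently.of_forall bd)
      (by isBoundedDefault)
  filter_upwards [ae_all_iff.2 main] with θ hθ
  have h1 := hθ ⌊θ⌋ ⟨Int.floor_le θ, (Int.lt_floor_add_one θ).le⟩
  have : IsFiniteMeasure (Measure.map (P θ) μ) := Measure.isFiniteMeasure_map μ _
  refine aux_1d (Measure.map (P θ) μ) r hr hr0 ?_
  convert h1 using 4 with n
  rw [Measure.map_prod_map _ _ (hP θ) (hP θ), Measure.map_apply (by fun_prop)
    (measurableSet_le (by fun_prop) (by fun_prop))]
  rfl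
end
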